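/- arXiv:2401.03204 — 3 statements merged into one kernel-verified Lean document; each statement's English description precedes it below -/
import Mathlib

section
/- Part (1) of Lemma 5: 4·(3 + η₁ + 2η₂ + 3η₃)·(3 + η₃ + 2η₀ + 3η₁) ≡ −2(3+4y)·H + 5p + 9 (mod (4^p − 1)/3). -/
open Finset

/-- The cyclotomic class `D_i` of order 4 modulo `p` with respect to the
primitive root `θ`: `{θ^(i+4j) mod p : 0 ≤ j < (p-1)/4}`. -/
def cycD (p θ i : ℕ) : Finset ℕ :=
  (Finset.range ((p - 1) / 4)).image fun j => θ ^ (i + 4 * j) % p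

/-- `η_i = Σ_{t ∈ D_i} 4^t` as an integer. -/
def eta4 (p θ : ℕ) (i : ℕ) : ℤ := ∑ t ∈ cycD p θ i, (4 : ℤ) ^ t

/-- `H = η₀ + η₂ − η₁ − η₃`. -/
def Hval (p θ : ℕ) : ℤ := eta4 p θ 0 + eta4 p θ 2 - eta4 p θ 1 - eta4 p θ 3

set_option linter.unusedSimpArgs false
open Complex in
lemma aux_I_inj {k i : ℕ} (h : I ^ k = I ^ i) (hi : i < 4) : k % 4 = i := by
  have h1 : I ^ (k % 4) = I ^ i := by rw [← h]; exact (Complex.I_pow_eq_pow_mod k).symm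
  have hk : k % 4 < 4 := Nat.mod_lt _ (by norm_num)
  generalize k % 4 = m at *
  interval_cases m <;> interval_cases i <;> simp [Complex.ext_iff, pow_succ] at h1 ⊢ <;> norm_num at h1

open Complex in
lemma aux_pow (p : ℕ) [Fact p.Prime] (hp8 : p % 8 = 5) (θ : ℕ)
    (hθ : IsPrimitiveRoot (θ : ZMod p) (p - 1)) (a : ZMod p) (ha : a ≠ 0) :
    ∃ k < p - 1, (θ : ZMod p) ^ k = a := by
  have : NeZero (p - 1) := ⟨by omega⟩
  exact hθ.eq_pow_of_pow_eq_one (ZMod.pow_card_sub_one_eq_one ha)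

open Complex in
lemma aux_exists_chi (p : ℕ) [Fact p.Prime] (hp8 : p % 8 = 5) (θ : ℕ)
    (hθ : IsPrimitiveRoot (θ : ZMod p) (p - 1)) :
    ∃ χ : MulChar (ZMod p) ℂ, χ (θ : ZMod p) = I := by
  have hp1 : p - 1 ≠ 0 := by omega
  have hu : IsUnit (θ : ZMod p) := hθ.isUnit hp1
  obtain ⟨g, hg⟩ := hu
  have hcard : Fintype.card (ZMod p)ˣ = p - 1 := ZMod.card_units p
  have hgen : ∀ x, x ∈ Subgroup.zpowers g := by
    intro x
    obtain ⟨k, -, hk⟩ := aux_pow p hp8 θ hθ (x : ZMod p) x.ne_zero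
    refine Subgroup.mem_zpowers_iff.2 ⟨k, ?_⟩
    ext
    rw [zpow_natCast, Units.val_pow_eq_pow_val, hg, hk]
  have hI : (Units.mk0 I I_ne_zero) ∈ rootsOfUnity (Fintype.card (ZMod p)ˣ) ℂ := by
    rw [_root_.mem_rootsOfUnity, hcard]
    ext
    obtain ⟨m, hm⟩ : 4 ∣ p - 1 := by omega
    simp [hm, pow_mul]
  refine ⟨MulChar.ofRootOfUnity hI hgen, ?_⟩
  rw [← hg, MulChar.ofRootOfUnity_spec]
  rfl

open Complex in
lemma aux_mem (p : ℕ) [Fact p.Prime] (hp8 : p % 8 = 5) (θ : ℕ)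
    (hθ : IsPrimitiveRoot (θ : ZMod p) (p - 1)) (χ : MulChar (ZMod p) ℂ)
    (hχ : χ (θ : ZMod p) = I) (t i : ℕ) (hi : i < 4) :
    t ∈ cycD p θ i ↔ t < p ∧ χ (t : ZMod p) = I ^ i := by
  have hp0 : 0 < p := by omega
  unfold cycD
  simp only [Finset.mem_image, Finset.mem_range]
  constructor
  · rintro ⟨j, hj, rfl⟩
    refine ⟨Nat.mod_lt _ hp0, ?_⟩
    simp [hχ, pow_add, pow_mul]
  · rintro ⟨ht, hc⟩
    have h0 : (t : ZMod p) ≠ 0 := by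
      intro h
      rw [h, MulChar.map_zero] at hc
      exact pow_ne_zero i I_ne_zero hc.symm
    obtain ⟨k, hk, hkt⟩ := aux_pow p hp8 θ hθ _ h0
    rw [← hkt, map_pow, hχ] at hc
    have := aux_I_inj hc hi
    refine ⟨k / 4, by omega, ?_⟩
    have h4 : i + 4 * (k / 4) = k := by omega
    rw [h4]
    have : ((θ ^ k : ℕ) : ZMod p) = (t : ℕ) := by push_cast; exact hkt
    rw [ZMod.natCast_eq_natCast_iff'] at this
    rw [this, Nat.mod_eq_of_lt ht]

open Complex in
lemma aux_vals (p : ℕ) [Fact p.Prime] (hp8 : p % 8 = 5) (θ : ℕ)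
    (hθ : IsPrimitiveRoot (θ : ZMod p) (p - 1)) (χ : MulChar (ZMod p) ℂ)
    (hχ : χ (θ : ZMod p) = I) (a : ZMod p) :
    (a = 0 ∧ χ a = 0) ∨ (a ≠ 0 ∧ (χ a = 1 ∨ χ a = I ∨ χ a = -1 ∨ χ a = -I)) := by
  by_cases ha : a = 0
  · left; exact ⟨ha, by rw [ha, MulChar.map_zero]⟩
  · right
    refine ⟨ha, ?_⟩
    obtain ⟨k, hk, hkt⟩ := aux_pow p hp8 θ hθ _ ha
    rw [← hkt, map_pow, hχ, Complex.I_pow_eq_pow_mod]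
    have hk : k % 4 < 4 := Nat.mod_lt _ (by norm_num)
    generalize k % 4 = m at *
    interval_cases m <;> simp [pow_succ]

lemma aux_sum (p : ℕ) [Fact p.Prime] (f : ZMod p → ℂ) :
    ∑ t ∈ Finset.range p, f (t : ZMod p) = ∑ a, f a := by
  refine Finset.sum_nbij' (fun t => (t : ZMod p)) (fun a => a.val) ?_ ?_ ?_ ?_ ?_
  · simp
  · intro a _; simpa using ZMod.val_lt a
  · intro t ht; simpa using ZMod.val_natCast_of_lt (by simpa using ht)
  · intro a _; simp
  · simp

lemma aux_arith (p : ℕ) (hp : p.Prime) (x y a b : ℤ) (hx : x % 4 = 1)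
    (hxy : (p : ℤ) = x ^ 2 + 4 * y ^ 2) (hab : (p : ℤ) = a ^ 2 + b ^ 2)
    (h : 2 * x - 8 * y = -2 * a - 4 * b) : b = 2 * y := by
  obtain ⟨e, he⟩ : ∃ e, e = 2 * y - b := ⟨_, rfl⟩
  have hb : 2 * y = b + e := by omega
  have hxe : x = -a + 2 * e := by omega
  have h0 : e * (5 * e - 4 * a + 2 * b) = 0 := by
    have h1 : (p : ℤ) = x ^ 2 + (2 * y) ^ 2 := by rw [hxy]; ring
    rw [hb, hxe, hab] at h1
    linarith
  rcases mul_eq_zero.1 h0 with h1 | h1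
  · omega
  · obtain ⟨f, hf⟩ : ∃ f, b = 2 * a + 5 * f := ⟨(b - 2 * a) / 5, by omega⟩
    have h5 : (5 : ℤ) ∣ p := ⟨a ^ 2 + 4 * a * f + 5 * f ^ 2, by rw [hab, hf]; ring⟩
    have h5' : 5 ∣ p := by exact_mod_cast h5
    have hp5 : p = 5 := ((Nat.prime_dvd_prime_iff_eq (by norm_num) hp).1 h5').symm
    subst hp5
    have ha1 : a ≤ 2 := by push_cast at hab; nlinarith [sq_nonneg b]
    have ha2 : -2 ≤ a := by push_cast at hab; nlinarith [sq_nonneg b]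
    have hb1 : b ≤ 2 := by push_cast at hab; nlinarith [sq_nonneg a]
    have hb2 : -2 ≤ b := by push_cast at hab; nlinarith [sq_nonneg a]
    interval_cases a <;> interval_cases b <;> omega

lemma aux_reduce (p : ℕ) (hp : p.Prime) (P : Polynomial ℤ) (ζ : ℂ) (hζ : IsPrimitiveRoot ζ p)
    (h : Polynomial.aeval ζ P = 0) : (((4 : ℤ) ^ p - 1) / 3) ∣ P.eval 4 := by
  have h1 : Polynomial.cyclotomic p ℤ ∣ P := by
    rw [Polynomial.cyclotomic_eq_minpoly hζ hp.pos]
    exact minpoly.isIntegrallyClosed_dvd (hζ.isIntegral hp.pos) h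
  have h2 := Polynomial.eval_dvd (x := (4 : ℤ)) h1
  have : Fact p.Prime := ⟨hp⟩
  have h3 : (Polynomial.cyclotomic p ℤ).eval 4 * 3 = 4 ^ p - 1 := by
    have := congrArg (Polynomial.eval (4 : ℤ)) (Polynomial.cyclotomic_prime_mul_X_sub_one ℤ p)
    simpa using this
  rw [← h3, Int.mul_ediv_cancel _ (by norm_num)]
  exact h2

open Complex in
lemma aux_periods (p : ℕ) [Fact p.Prime] (hp8 : p % 8 = 5) (θ : ℕ)
    (hθ : IsPrimitiveRoot (θ : ZMod p) (p - 1)) (χ : MulChar (ZMod p) ℂ)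
    (hχ : χ (θ : ZMod p) = I) (ζ : ℂ) (φ : MulChar (ZMod p) ℂ) (c : ℕ → ℂ)
    (hφ : ∀ a, φ a = (if χ a = I ^ 0 then c 0 else 0) + (if χ a = I ^ 1 then c 1 else 0)
      + (if χ a = I ^ 2 then c 2 else 0) + (if χ a = I ^ 3 then c 3 else 0))
    (ψ : AddChar (ZMod p) ℂ) (hψ : ∀ t : ℕ, ψ (t : ZMod p) = ζ ^ t) :
    gaussSum φ ψ = c 0 * ∑ t ∈ cycD p θ 0, ζ ^ t + c 1 * ∑ t ∈ cycD p θ 1, ζ ^ t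
      + c 2 * ∑ t ∈ cycD p θ 2, ζ ^ t + c 3 * ∑ t ∈ cycD p θ 3, ζ ^ t := by
  have key : ∀ i < 4, c i * ∑ t ∈ cycD p θ i, ζ ^ t =
      ∑ a, (if χ a = I ^ i then c i else 0) * ψ a := by
    intro i hi
    rw [← aux_sum, Finset.mul_sum]
    have : cycD p θ i = (Finset.range p).filter (fun t : ℕ => χ (t : ZMod p) = I ^ i) := by
      ext t
      rw [aux_mem p hp8 θ hθ χ hχ t i hi]
      simp
    rw [this, Finset.sum_filter]
    refine Finset.sum_congr rfl fun t _ => ?_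
    rw [hψ]
    split_ifs <;> simp
  rw [key 0 (by norm_num), key 1 (by norm_num), key 2 (by norm_num), key 3 (by norm_num),
    gaussSum, ← Finset.sum_add_distrib, ← Finset.sum_add_distrib, ← Finset.sum_add_distrib]
  refine Finset.sum_congr rfl fun a _ => ?_
  rw [hφ]
  ring

open Complex in
lemma aux_int (z : ℂ) (h : z ∈ Algebra.adjoin ℤ {I}) : ∃ a b : ℤ, z = a + b * I := by
  induction h using Algebra.adjoin_induction with
  | mem x hx => exact ⟨0, 1, by simp at hx; simp [hx]⟩
  | algebraMap r => exact ⟨r, 0, by simp⟩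
  | add x y _ _ hx hy =>
    obtain ⟨a, b, rfl⟩ := hx
    obtain ⟨c, d, rfl⟩ := hy
    exact ⟨a + c, b + d, by push_cast; ring⟩
  | mul x y _ _ hx hy =>
    obtain ⟨a, b, rfl⟩ := hx
    obtain ⟨c, d, rfl⟩ := hy
    refine ⟨a * c - b * d, a * d + b * c, ?_⟩
    push_cast
    linear_combination (b * d : ℂ) * I_mul_I

open Complex in
lemma aux_main (p : ℕ) [Fact p.Prime] (hp8 : p % 8 = 5)
    (x y : ℤ) (hx : x % 4 = 1) (hxy : (p : ℤ) = x ^ 2 + 4 * y ^ 2)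
    (θ : ℕ) (hθ : IsPrimitiveRoot (θ : ZMod p) (p - 1))
    (hy : 16 * (((cycD p θ 0).filter (fun a => (a + 1) % p ∈ cycD p θ 1)).card : ℤ)
        = (p : ℤ) + 1 + 2 * x - 8 * y) (ζ : ℂ) (hζ : IsPrimitiveRoot ζ p)
    (E : ℕ → ℂ) (hE : ∀ i, E i = ∑ t ∈ cycD p θ i, ζ ^ t) :
    4 * (3 + E 1 + 2 * E 2 + 3 * E 3) * (3 + E 3 + 2 * E 0 + 3 * E 1)
      = -2 * (3 + 4 * y) * (E 0 + E 2 - E 1 - E 3) + 5 * (p : ℂ) + 9 := by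
  have hp : p.Prime := Fact.out
  have hpC : (p : ℂ) ≠ 0 := by exact_mod_cast hp.ne_zero
  obtain ⟨χ, hχ⟩ := aux_exists_chi p hp8 θ hθ
  have hv := aux_vals p hp8 θ hθ χ hχ
  have hI1 : I ≠ 1 := by simp [Complex.ext_iff]
  have hI1' : (1 : ℂ) ≠ I := hI1.symm
  have hIn1 : I ≠ -1 := by simp [Complex.ext_iff]
  have hIn1' : (-1 : ℂ) ≠ I := hIn1.symm
  have hnI1 : -I ≠ 1 := by simp [Complex.ext_iff]
  have hnI1' : (1 : ℂ) ≠ -I := hnI1.symm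
  have hInI : I ≠ -I := by simp [Complex.ext_iff]; norm_num
  have hInI' : -I ≠ I := hInI.symm
  have h11 : (1 : ℂ) ≠ -1 := by norm_num
  have h11' : (-1 : ℂ) ≠ 1 := by norm_num
  have hI3 : I ^ 3 = -I := by rw [pow_succ, I_sq]; ring
  have hinv : ∀ a, χ⁻¹ a = (χ a)⁻¹ := fun a => MulChar.inv_apply_eq_inv' χ a
  have hsq : ∀ a, (χ * χ) a = χ a * χ a := fun a => MulChar.mul_apply χ χ a
  have h4 : χ ^ 4 = 1 := by
    ext a
    rw [MulChar.pow_apply_coe, MulChar.one_apply_coe]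
    rcases hv a with ⟨h, _⟩ | ⟨_, h | h | h | h⟩
    · exact absurd h a.ne_zero
    all_goals rw [h]; norm_num
  have hρρ : (χ * χ) * (χ * χ) = 1 := by rw [← h4]; simp only [pow_succ, pow_zero, one_mul, mul_assoc]
  have hθ0 : (θ : ZMod p) ≠ 0 := by
    intro h; rw [h, MulChar.map_zero] at hχ; exact I_ne_zero hχ.symm
  have hne : ∀ φ : MulChar (ZMod p) ℂ, φ (θ : ZMod p) ≠ 1 → φ ≠ 1 := by
    rintro φ h rfl
    exact h (MulChar.one_apply (isUnit_iff_ne_zero.2 hθ0))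
  have hχ1 : χ ≠ 1 := hne _ (by rw [hχ]; exact hI1)
  have hχi1 : χ⁻¹ ≠ 1 := by simpa using hχ1
  have hρ1 : χ * χ ≠ 1 := hne _ (by rw [hsq, hχ, I_mul_I]; exact h11')
  have hρinv : (χ * χ)⁻¹ = χ * χ := inv_eq_of_mul_eq_one_left hρρ
  have hχρ : χ * (χ * χ) = χ⁻¹ := by
    apply eq_inv_of_mul_eq_one_left; rw [← h4]; simp only [pow_succ, pow_zero, one_mul, mul_assoc]
  have hρi : χ⁻¹ * χ⁻¹ = χ * χ := by rw [← hρinv, mul_inv]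
  have hm1 : χ (-1) = -1 := by
    have h2 : χ (-1) * χ (-1) = 1 := by rw [← map_mul]; simp
    have hn0 : (-1 : ZMod p) ≠ 0 := by simp
    obtain ⟨k, hk, hk1⟩ := aux_pow p hp8 θ hθ (-1) hn0
    have hk2 : (θ : ZMod p) ^ (2 * k) = 1 := by rw [mul_comm, pow_mul, hk1]; simp
    have hd := hθ.dvd_of_pow_eq_one _ hk2
    have hk0 : k ≠ 0 := by
      rintro rfl
      have : Fact (2 < p) := ⟨by have := hp.two_le; omega⟩
      exact ZMod.neg_one_ne_one (by rw [← hk1, pow_zero])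
    have hk3 : 2 * k = p - 1 := by
      obtain ⟨m, hm⟩ := hd
      have : m = 1 := by
        have h1 : m < 2 := by
          by_contra hc
          have : (p - 1) * 2 ≤ (p - 1) * m := Nat.mul_le_mul_left _ (by omega)
          omega
        have : m ≠ 0 := by rintro rfl; omega
        omega
      rw [this] at hm; omega
    rw [← hk1, map_pow, hχ, Complex.I_pow_eq_pow_mod]
    have : k % 4 = 2 := by omega
    rw [this, I_sq]
  have hρm1 : (χ * χ) (-1) = 1 := by rw [hsq, hm1]; norm_num
  have hcardF : (Fintype.card (ZMod p) : ℂ) = p := by rw [ZMod.card]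
  -- Gauss sums
  have : NeZero p := ⟨hp.ne_zero⟩
  obtain ⟨ψ, hψp, hψ⟩ : ∃ ψ : AddChar (ZMod p) ℂ, ψ.IsPrimitive ∧
      ∀ t : ℕ, ψ (t : ZMod p) = ζ ^ t :=
    ⟨_, AddChar.zmodChar_primitive_of_primitive_root p hζ, fun t => AddChar.zmodChar_apply' _ t⟩
  have hψ1 : ψ ≠ 1 := by
    rintro rfl
    have := hψ 1
    simp at this
    exact hζ.ne_one hp.one_lt this.symm
  have per := aux_periods p hp8 θ hθ χ hχ ζ
  simp only [← hE] at per
  have g0 : gaussSum 1 ψ = 1 * E 0 + 1 * E 1 + 1 * E 2 + 1 * E 3 := by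
    refine per 1 (fun _ => 1) (fun a => ?_) ψ hψ
    rcases hv a with ⟨h, h'⟩ | ⟨h, h' | h' | h' | h'⟩
    · rw [h', h, MulChar.map_zero, hI3]; simp [I_ne_zero.symm]
    all_goals rw [h', MulChar.one_apply (isUnit_iff_ne_zero.2 h), hI3]; simp [hI1, hI1', hIn1, hIn1', hnI1, hnI1', hInI, hInI', h11, h11']
  have g1 : gaussSum χ ψ = 1 * E 0 + I * E 1 + (-1) * E 2 + (-I) * E 3 := by
    refine per χ (fun i => match i with | 0 => 1 | 1 => I | 2 => -1 | _ => -I) (fun a => ?_) ψ hψ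
    rcases hv a with ⟨h, h'⟩ | ⟨h, h' | h' | h' | h'⟩
    · rw [h', hI3]; simp [I_ne_zero.symm]
    all_goals rw [h', hI3]; simp [hI1, hI1', hIn1, hIn1', hnI1, hnI1', hInI, hInI', h11, h11']
  have g2 : gaussSum (χ * χ) ψ = 1 * E 0 + (-1) * E 1 + 1 * E 2 + (-1) * E 3 := by
    refine per (χ * χ) (fun i => match i with | 0 => 1 | 1 => -1 | 2 => 1 | _ => -1) (fun a => ?_) ψ hψ
    rw [hsq]
    rcases hv a with ⟨h, h'⟩ | ⟨h, h' | h' | h' | h'⟩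
    · rw [h', hI3]; simp [I_ne_zero.symm]
    all_goals rw [h', hI3]; simp [hI1, hI1', hIn1, hIn1', hnI1, hnI1', hInI, hInI', h11, h11']
  have g3 : gaussSum χ⁻¹ ψ = 1 * E 0 + (-I) * E 1 + (-1) * E 2 + I * E 3 := by
    refine per χ⁻¹ (fun i => match i with | 0 => 1 | 1 => -I | 2 => -1 | _ => I) (fun a => ?_) ψ hψ
    rw [hinv]
    rcases hv a with ⟨h, h'⟩ | ⟨h, h' | h' | h' | h'⟩
    · rw [h', hI3]; simp [I_ne_zero.symm]
    all_goals rw [h', hI3]; simp [hI1, hI1', hIn1, hIn1', hnI1, hnI1', hInI, hInI', h11, h11']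
  rw [gaussSum_one_left hψ1] at g0
  have q1 : gaussSum χ ψ * gaussSum χ⁻¹ ψ = -p := by
    have h1 := gaussSum_mul_gaussSum_eq_card hχ1 hψp
    have h2 := mul_gaussSum_inv_eq_gaussSum χ⁻¹ ψ
    rw [hinv, hm1] at h2
    rw [← h2, ← hcardF, ← h1]
    norm_num
  have q2 : gaussSum (χ * χ) ψ * gaussSum (χ * χ) ψ = p := by
    have h1 := gaussSum_mul_gaussSum_eq_card hρ1 hψp
    have h2 := mul_gaussSum_inv_eq_gaussSum (χ * χ) ψ
    rw [hρinv] at h1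
    rw [hρm1, one_mul] at h2
    rw [h2, hcardF] at h1
    exact h1
  have q3 := jacobiSum_mul_nontrivial hρ1 ψ
  have q4 := jacobiSum_mul_nontrivial (χ := χ) (φ := χ * χ) (by rw [hχρ]; exact hχi1) ψ
  rw [hχρ] at q4
  have q5 := jacobiSum_mul_nontrivial (χ := χ⁻¹) (φ := χ⁻¹) (by rw [hρi]; exact hρ1) ψ
  rw [hρi] at q5
  have J12 : jacobiSum χ (χ * χ) = -jacobiSum χ χ := by
    apply mul_left_cancel₀ hpC
    linear_combination (jacobiSum χ (χ * χ)) * q1 - gaussSum χ ψ * q4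
      + gaussSum (χ * χ) ψ * q3 - jacobiSum χ χ * q2
  have hconj : ∀ φ φ' : MulChar (ZMod p) ℂ,
      jacobiSum φ⁻¹ φ'⁻¹ = (starRingEnd ℂ) (jacobiSum φ φ') := by
    intro φ φ'
    rw [← jacobiSum_ringHomComp]
    congr 1
    · exact (MulChar.star_eq_inv φ).symm
    · exact (MulChar.star_eq_inv φ').symm
  have J32 : jacobiSum χ⁻¹ (χ * χ) = -jacobiSum χ⁻¹ χ⁻¹ := by
    have := congrArg (starRingEnd ℂ) J12
    rw [map_neg, ← hconj, ← hconj, hρinv] at this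
    exact this
  obtain ⟨a, b, hab⟩ := aux_int _
    (jacobiSum_mem_algebraAdjoin_of_pow_eq_one h4 h4 Complex.isPrimitiveRoot_I)
  have hab' : jacobiSum χ⁻¹ χ⁻¹ = a - b * I := by
    rw [hconj, hab]; simp; ring
  have hnorm : (p : ℤ) = a ^ 2 + b ^ 2 := by
    have : (p : ℂ) = a ^ 2 + b ^ 2 := by
      have h1 : (p : ℂ) * p = p * (jacobiSum χ χ * jacobiSum χ⁻¹ χ⁻¹) := by
        linear_combination ((p : ℂ) - gaussSum χ ψ * gaussSum χ⁻¹ ψ) * q1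
          - (gaussSum χ⁻¹ ψ) ^ 2 * q3 - gaussSum (χ * χ) ψ * jacobiSum χ χ * q5
          + jacobiSum χ χ * jacobiSum χ⁻¹ χ⁻¹ * q2
      have h2 := mul_left_cancel₀ hpC h1
      rw [h2, hab, hab']
      linear_combination (-(b : ℂ) ^ 2) * I_mul_I
    exact_mod_cast this
  -- counting
  have count : (16 : ℂ) * (((cycD p θ 0).filter (fun a => (a + 1) % p ∈ cycD p θ 1)).card : ℂ)
      = p + 1 - 2 * a - 4 * b := by
    have c1 : (((cycD p θ 0).filter (fun a => (a + 1) % p ∈ cycD p θ 1)).card : ℂ)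
        = ∑ a : ZMod p, if (χ a = 1 ∧ χ (a + 1) = I) then (1 : ℂ) else 0 := by
      rw [← aux_sum]
      have : (cycD p θ 0).filter (fun a => (a + 1) % p ∈ cycD p θ 1)
          = (Finset.range p).filter (fun t : ℕ => χ (t : ZMod p) = 1 ∧ χ ((t : ZMod p) + 1) = I) := by
        ext t
        simp only [Finset.mem_filter, Finset.mem_range]
        rw [aux_mem p hp8 θ hθ χ hχ t 0 (by norm_num),
          aux_mem p hp8 θ hθ χ hχ _ 1 (by norm_num)]
        simp [Nat.mod_lt _ hp.pos, and_assoc]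
      rw [this, ← Finset.sum_filter]
      simp
    have c2 : (16 : ℂ) * ∑ a : ZMod p, (if (χ a = 1 ∧ χ (a + 1) = I) then (1 : ℂ) else 0)
        = ∑ a : ZMod p, ((1 : MulChar (ZMod p) ℂ) a - χ a + (χ * χ) a - χ⁻¹ a) *
          ((1 : MulChar (ZMod p) ℂ) (1 - a) - I * χ (1 - a) - (χ * χ) (1 - a)
            + I * χ⁻¹ (1 - a)) := by
      rw [← Equiv.sum_comp (Equiv.neg (ZMod p))
        (fun a : ZMod p => if (χ a = 1 ∧ χ (a + 1) = I) then (1 : ℂ) else 0), Finset.mul_sum]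
      refine Finset.sum_congr rfl fun a _ => ?_
      have e1 : χ (-a) = -χ a := by rw [← neg_one_mul, map_mul, hm1]; ring
      have e2 : (-a) + 1 = 1 - a := by ring
      have e3 : (16 : ℂ) * (if (χ (-a) = 1 ∧ χ (-a + 1) = I) then (1 : ℂ) else 0)
        = (if χ (-a) = 1 then 4 else 0) * (if χ (1 - a) = I then 4 else 0) := by
        rw [e2]
        by_cases h1 : χ (-a) = 1 <;> by_cases h2 : χ (1 - a) = I <;> simp [h1, h2]; norm_num
      simp only [Equiv.neg_apply]
      rw [e3, e1]
      congr 1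
      · rw [hsq, hinv]
        rcases hv a with ⟨h, h'⟩ | ⟨h, h' | h' | h' | h'⟩
        · rw [h', h, MulChar.map_zero]; simp
        all_goals
          rw [h', MulChar.one_apply (isUnit_iff_ne_zero.2 h)]; simp [hI1, hI1', hIn1, hIn1', hnI1, hnI1', hInI, hInI', h11, h11']
        all_goals try ring
      · rw [hsq, hinv]
        rcases hv (1 - a) with ⟨h, h'⟩ | ⟨h, h' | h' | h' | h'⟩
        · rw [h', h, MulChar.map_zero]; simp [I_ne_zero.symm]
        all_goals
          rw [h', MulChar.one_apply (isUnit_iff_ne_zero.2 h)]; simp [hI1, hI1', hIn1, hIn1', hnI1, hnI1', hInI, hInI', h11, h11']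
        all_goals try ring
    have c3 : ∑ a : ZMod p, ((1 : MulChar (ZMod p) ℂ) a - χ a + (χ * χ) a - χ⁻¹ a) *
          ((1 : MulChar (ZMod p) ℂ) (1 - a) - I * χ (1 - a) - (χ * χ) (1 - a)
            + I * χ⁻¹ (1 - a))
        = (jacobiSum (1 : MulChar (ZMod p) ℂ) 1 - I * jacobiSum 1 χ - jacobiSum 1 (χ * χ) + I * jacobiSum 1 χ⁻¹)
          - (jacobiSum χ 1 - I * jacobiSum χ χ - jacobiSum χ (χ * χ) + I * jacobiSum χ χ⁻¹)
          + (jacobiSum (χ * χ) 1 - I * jacobiSum (χ * χ) χ - jacobiSum (χ * χ) (χ * χ)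
            + I * jacobiSum (χ * χ) χ⁻¹)
          - (jacobiSum χ⁻¹ 1 - I * jacobiSum χ⁻¹ χ - jacobiSum χ⁻¹ (χ * χ)
            + I * jacobiSum χ⁻¹ χ⁻¹) := by
      simp only [jacobiSum, Finset.mul_sum, ← Finset.sum_add_distrib, ← Finset.sum_sub_distrib]
      refine Finset.sum_congr rfl fun a _ => ?_
      ring
    have j22 : jacobiSum (χ * χ) (χ * χ) = -1 := by
      have := jacobiSum_nontrivial_inv hρ1
      rwa [hρinv, hρm1] at this
    have j13 : jacobiSum χ χ⁻¹ = 1 := by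
      rw [jacobiSum_nontrivial_inv hχ1, hm1]; norm_num
    rw [c1, c2, c3, jacobiSum_comm χ 1, jacobiSum_comm (χ * χ) 1, jacobiSum_comm χ⁻¹ 1,
      jacobiSum_comm (χ * χ) χ, jacobiSum_comm (χ * χ) χ⁻¹, jacobiSum_comm χ⁻¹ χ,
      jacobiSum_one_one, jacobiSum_one_nontrivial hχ1, jacobiSum_one_nontrivial hρ1,
      jacobiSum_one_nontrivial hχi1, j22, j13, J12, J32, hab, hab', hcardF]
    linear_combination (4 * b : ℂ) * I_mul_I
  have hb : b = 2 * y := by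
    refine aux_arith p hp x y a b hx hxy hnorm ?_
    have count' : 16 * (((cycD p θ 0).filter (fun a => (a + 1) % p ∈ cycD p θ 1)).card : ℤ)
        = (p : ℤ) + 1 - 2 * a - 4 * b := by exact_mod_cast count
    linarith
  -- conclusion
  rw [g1, g2, hab] at q3
  rw [g3, g2, hab'] at q5
  rw [g1, g3] at q1
  rw [g2] at q2
  have hbC : (b : ℂ) = 2 * y := by rw [hb]; push_cast; ring
  have uv : 2 * (E 0 - E 2) * (E 1 - E 3) = b * (E 0 + E 2 - E 1 - E 3) := by
    have : (2 * I) * (2 * (E 0 - E 2) * (E 1 - E 3)) = (2 * I) * (b * (E 0 + E 2 - E 1 - E 3)) := by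
      linear_combination q5 - q3
    exact mul_left_cancel₀ (by simp) this
  have uu : (E 0 - E 2) ^ 2 + (E 1 - E 3) ^ 2 = -p := by
    linear_combination q1 + (E 1 - E 3) ^ 2 * I_mul_I
  rw [hbC] at uv
  have hE3 : E 3 = -1 - E 0 - E 1 - E 2 := by linear_combination -g0
  rw [hE3] at uv uu q2 ⊢
  linear_combination q2 - 4 * uu - 4 * uv

theorem lemma5_part1
    (p : ℕ) (hp : p.Prime) (hp8 : p % 8 = 5)
    (x y : ℤ) (hx : x % 4 = 1) (hxy : (p : ℤ) = x ^ 2 + 4 * y ^ 2)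
    (θ : ℕ) (hθ : IsPrimitiveRoot (θ : ZMod p) (p - 1))
    (hy : 16 * (((cycD p θ 0).filter (fun a => (a + 1) % p ∈ cycD p θ 1)).card : ℤ)
        = (p : ℤ) + 1 + 2 * x - 8 * y)
    :
    4 * (3 + eta4 p θ 1 + 2 * eta4 p θ 2 + 3 * eta4 p θ 3) * (3 + eta4 p θ 3 + 2 * eta4 p θ 0 + 3 * eta4 p θ 1)
      ≡ -2 * (3 + 4 * y) * Hval p θ + 5 * (p : ℤ) + 9 [ZMOD ((4 : ℤ) ^ p - 1) / 3] := by
  have : Fact p.Prime := ⟨hp⟩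
  have hζ := Complex.isPrimitiveRoot_exp p hp.ne_zero
  generalize Complex.exp (2 * Real.pi * Complex.I / p) = ζ at hζ
  have hm := aux_main p hp8 x y hx hxy θ hθ hy ζ hζ (fun i => ∑ t ∈ cycD p θ i, ζ ^ t)
    (fun _ => rfl)
  let Q : ℕ → Polynomial ℤ := fun i => ∑ t ∈ cycD p θ i, Polynomial.X ^ t
  have hQ : ∀ i, (Q i).eval 4 = eta4 p θ i := by
    intro i; simp [Q, eta4, Polynomial.eval_finsetSum]
  have hQζ : ∀ i, Polynomial.aeval ζ (Q i) = ∑ t ∈ cycD p θ i, ζ ^ t := by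
    intro i; simp [Q]
  have := aux_reduce p hp
    ((-2 * (3 + 4 * Polynomial.C y) * (Q 0 + Q 2 - Q 1 - Q 3) + 5 * Polynomial.C (p : ℤ) + 9) -
      4 * (3 + Q 1 + 2 * Q 2 + 3 * Q 3) * (3 + Q 3 + 2 * Q 0 + 3 * Q 1)) ζ hζ (by
      simp only [map_sub, map_add, map_mul, hQζ, map_neg, Polynomial.aeval_C, map_ofNat]
      rw [sub_eq_zero]
      simpa using hm.symm)
  rw [Int.modEq_iff_dvd]
  unfold Hval
  simpa [hQ] using this
end

section
/- Part (2) of Lemma 5: 4·(1 + η₂ + 2η₁ + 3η₀)·(1 + η₀ + 2η₃ + 3η₂) ≡ −2(1+4y)·H + 5p + 1 (mod (4^p − 1)/3). -/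
open Finset

open Polynomial in
lemma transfer (p : ℕ) (hp : p.Prime) (ζ : ℂ) (hζ : IsPrimitiveRoot ζ p) (F : ℤ[X])
    (hF : aeval ζ F = 0) : ((4 : ℤ) ^ p - 1) / 3 ∣ F.eval 4 := by
  have : Fact p.Prime := ⟨hp⟩
  have h1 : cyclotomic p ℤ ∣ F := by
    rw [cyclotomic_eq_minpoly hζ hp.pos]
    exact minpoly.isIntegrallyClosed_dvd (hζ.isIntegral hp.pos) hF
  obtain ⟨G, rfl⟩ := h1
  have h2 : (cyclotomic p ℤ).eval 4 = ((4 : ℤ) ^ p - 1) / 3 := by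
    rw [cyclotomic_prime]
    have := geom_sum_mul (4 : ℤ) p
    simp only [eval_finsetSum, eval_pow, eval_X]
    rw [← this]
    norm_num
  rw [eval_mul, h2]
  exact dvd_mul_right _ _

lemma sum4 (f : ℕ) (h : ℕ → ℂ) : ∑ n ∈ range (4 * f), h n
    = ∑ j ∈ range f, (h (0 + 4 * j) + h (1 + 4 * j) + h (2 + 4 * j) + h (3 + 4 * j)) := by
  induction f with
  | zero => simp
  | succ k ih =>
    rw [sum_range_succ, ← ih, show 4 * (k + 1) = 4 * k + 1 + 1 + 1 + 1 by ring]
    simp only [sum_range_succ]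
    rw [show 0 + 4 * k = 4 * k by ring, show 1 + 4 * k = 4 * k + 1 by ring,
      show 2 + 4 * k = 4 * k + 1 + 1 by ring, show 3 + 4 * k = 4 * k + 1 + 1 + 1 by ring]
    ring

lemma theta_ne (p : ℕ) [Fact p.Prime] (hp8 : p % 8 = 5) (θ : ℕ)
    (hθ : IsPrimitiveRoot (θ : ZMod p) (p - 1)) : (θ : ZMod p) ≠ 0 :=
  hθ.ne_zero (by omega)

lemma image_pow (p : ℕ) [Fact p.Prime] (hp8 : p % 8 = 5) (θ : ℕ)
    (hθ : IsPrimitiveRoot (θ : ZMod p) (p - 1)) :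
    (range (p - 1)).image (fun n => (θ : ZMod p) ^ n) = univ.erase 0 := by
  apply Finset.eq_of_subset_of_card_le
  · intro a ha
    obtain ⟨n, _, rfl⟩ := mem_image.1 ha
    simp [theta_ne p hp8 θ hθ]
  · rw [card_image_of_injOn]
    · simp [ZMod.card]
    · intro a ha b hb hab
      exact hθ.pow_inj (by simpa using ha) (by simpa using hb) hab

lemma sum_univ_pow (p : ℕ) [Fact p.Prime] (hp8 : p % 8 = 5) (θ : ℕ)
    (hθ : IsPrimitiveRoot (θ : ZMod p) (p - 1)) (g : ZMod p → ℂ) (hg : g 0 = 0) :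
    ∑ a, g a = ∑ j ∈ range ((p - 1) / 4), (g (θ ^ (0 + 4 * j)) + g (θ ^ (1 + 4 * j))
      + g (θ ^ (2 + 4 * j)) + g (θ ^ (3 + 4 * j))) := by
  rw [← sum4 _ (fun n => g ((θ : ZMod p) ^ n)), show 4 * ((p - 1) / 4) = p - 1 by omega,
    ← sum_erase univ hg, ← image_pow p hp8 θ hθ, sum_image]
  intro a ha b hb hab
  exact hθ.pow_inj (by simpa using ha) (by simpa using hb) hab

lemma cyc_inj (p : ℕ) [Fact p.Prime] (hp8 : p % 8 = 5) (θ : ℕ)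
    (hθ : IsPrimitiveRoot (θ : ZMod p) (p - 1)) (i : ℕ) (hi : i < 4) (i' : ℕ) (hi' : i' < 4)
    (j j' : ℕ) (hj : j < (p - 1) / 4) (hj' : j' < (p - 1) / 4)
    (h : θ ^ (i + 4 * j) % p = θ ^ (i' + 4 * j') % p) : i = i' ∧ j = j' := by
  have h2 := (ZMod.natCast_eq_natCast_iff' _ _ p).2 h
  push_cast at h2
  have := hθ.pow_inj (by omega) (by omega) h2
  omega

lemma sum_cyc (p : ℕ) [Fact p.Prime] (hp8 : p % 8 = 5) (θ : ℕ)
    (hθ : IsPrimitiveRoot (θ : ZMod p) (p - 1)) (i : ℕ) (hi : i < 4) (h : ZMod p → ℂ) :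
    ∑ t ∈ cycD p θ i, h t = ∑ j ∈ range ((p - 1) / 4), h (θ ^ (i + 4 * j)) := by
  unfold cycD
  rw [sum_image]
  · simp
  · intro a ha b hb hab
    exact (cyc_inj p hp8 θ hθ i hi i hi a b (by simpa using ha) (by simpa using hb) hab).2

lemma exists_char (p : ℕ) [Fact p.Prime] (hp8 : p % 8 = 5) (θ : ℕ)
    (hθ : IsPrimitiveRoot (θ : ZMod p) (p - 1)) :
    ∃ χ : MulChar (ZMod p) ℂ, χ (θ : ZMod p) = Complex.I := by
  have h0 := theta_ne p hp8 θ hθ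
  let g : (ZMod p)ˣ := Units.mk0 _ h0
  have hg : ∀ x, x ∈ Subgroup.zpowers g := by
    intro x
    have hx : (x : ZMod p) ∈ (range (p - 1)).image (fun n => (θ : ZMod p) ^ n) := by
      rw [image_pow p hp8 θ hθ]; simp
    obtain ⟨n, _, hn⟩ := mem_image.1 hx
    refine ⟨n, ?_⟩
    ext
    simpa [g] using hn
  let ζ : ℂˣ := Units.mk0 Complex.I Complex.I_ne_zero
  have hζ : ζ ∈ rootsOfUnity (Fintype.card (ZMod p)ˣ) ℂ := by
    rw [mem_rootsOfUnity, ZMod.card_units]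
    ext
    simp only [ζ, Units.val_pow_eq_pow_val, Units.val_mk0, Units.val_one]
    rw [show p - 1 = 4 * ((p - 1) / 4) by omega, pow_mul, Complex.I_pow_four, one_pow]
  exact ⟨MulChar.ofRootOfUnity hζ hg, MulChar.ofRootOfUnity_spec hζ hg⟩

lemma chi_pow {p : ℕ} [Fact p.Prime] {θ : ℕ} {χ : MulChar (ZMod p) ℂ}
    (hχ : χ (θ : ZMod p) = Complex.I) (i j : ℕ) :
    χ ((θ : ZMod p) ^ (i + 4 * j)) = Complex.I ^ i := by
  rw [map_pow, hχ, pow_add, pow_mul, Complex.I_pow_four, one_pow, mul_one]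

lemma exists_rep (p : ℕ) [Fact p.Prime] (hp8 : p % 8 = 5) (θ : ℕ)
    (hθ : IsPrimitiveRoot (θ : ZMod p) (p - 1)) (a : ZMod p) (ha : a ≠ 0) :
    ∃ i < 4, ∃ j < (p - 1) / 4, a = (θ : ZMod p) ^ (i + 4 * j) := by
  have hx : a ∈ (range (p - 1)).image (fun n => (θ : ZMod p) ^ n) := by
    rw [image_pow p hp8 θ hθ]; simp [ha]
  obtain ⟨n, hn, h⟩ := mem_image.1 hx
  refine ⟨n % 4, by omega, n / 4, ?_, ?_⟩
  · have := mem_range.1 hn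
    omega
  · rw [Nat.mod_add_div]; exact h.symm

lemma chi_four (p : ℕ) [Fact p.Prime] (hp8 : p % 8 = 5) (θ : ℕ)
    (hθ : IsPrimitiveRoot (θ : ZMod p) (p - 1)) {χ : MulChar (ZMod p) ℂ}
    (hχ : χ (θ : ZMod p) = Complex.I) : χ ^ 4 = 1 := by
  ext a
  obtain ⟨i, hi, j, hj, h⟩ := exists_rep p hp8 θ hθ a a.ne_zero
  rw [MulChar.pow_apply_coe, h, chi_pow hχ, ← h, MulChar.one_apply_coe, ← pow_mul, mul_comm,
    pow_mul, Complex.I_pow_four, one_pow]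

lemma chi_neg_one (p : ℕ) [Fact p.Prime] (hp8 : p % 8 = 5) (θ : ℕ)
    (hθ : IsPrimitiveRoot (θ : ZMod p) (p - 1)) {χ : MulChar (ZMod p) ℂ}
    (hχ : χ (θ : ZMod p) = Complex.I) : χ (-1) = -1 := by
  have h1 : ((θ : ZMod p) ^ ((p - 1) / 2)) = -1 := by
    have h2 : IsPrimitiveRoot ((θ : ZMod p) ^ ((p - 1) / 2)) 2 :=
      hθ.pow (by omega) (by omega)
    exact h2.eq_neg_one_of_two_right
  rw [← h1, show (p - 1) / 2 = 2 + 4 * ((p - 1) / 8) by omega, chi_pow hχ, Complex.I_sq]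

lemma gauss_expand (p : ℕ) [Fact p.Prime] (hp8 : p % 8 = 5) (θ : ℕ)
    (hθ : IsPrimitiveRoot (θ : ZMod p) (p - 1)) (φ : MulChar (ZMod p) ℂ) (c : ℂ)
    (hφ : ∀ i j : ℕ, φ ((θ : ZMod p) ^ (i + 4 * j)) = c ^ i) (ψ : AddChar (ZMod p) ℂ) :
    gaussSum φ ψ = (∑ t ∈ cycD p θ 0, ψ t) + c * (∑ t ∈ cycD p θ 1, ψ t)
      + c ^ 2 * (∑ t ∈ cycD p θ 2, ψ t) + c ^ 3 * (∑ t ∈ cycD p θ 3, ψ t) := by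
  unfold gaussSum
  rw [sum_univ_pow p hp8 θ hθ _ (by simp [MulChar.map_zero])]
  simp only [hφ, sum_add_distrib, ← mul_sum]
  rw [sum_cyc p hp8 θ hθ 0 (by norm_num) ψ, sum_cyc p hp8 θ hθ 1 (by norm_num) ψ,
    sum_cyc p hp8 θ hθ 2 (by norm_num) ψ, sum_cyc p hp8 θ hθ 3 (by norm_num) ψ]
  simp

/-- detecting the class `1` -/
lemma detect (p : ℕ) [Fact p.Prime] (hp8 : p % 8 = 5) (θ : ℕ)
    (hθ : IsPrimitiveRoot (θ : ZMod p) (p - 1)) {χ : MulChar (ZMod p) ℂ}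
    (hχ : χ (θ : ZMod p) = Complex.I) (m : ℕ) :
    (4 * (if m % p ∈ cycD p θ 1 then 1 else 0) : ℂ) = (1 : MulChar (ZMod p) ℂ) m
      - Complex.I * χ m - (χ ^ 2) m + Complex.I * (χ ^ 3) m := by
  have hp0 : 0 < p := by omega
  by_cases hm : (m : ZMod p) = 0
  · have : m % p ∉ cycD p θ 1 := by
      intro h
      obtain ⟨j, _, hj⟩ := mem_image.1 h
      have h2 := (ZMod.natCast_eq_natCast_iff' _ _ p).2 hj
      have h3 : (θ : ZMod p) ^ (1 + 4 * j) = 0 := by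
        rw [hm] at h2
        exact_mod_cast h2
      exact theta_ne p hp8 θ hθ (pow_eq_zero_iff (by omega) |>.1 h3)
    simp [this, hm, MulChar.map_zero]
  · obtain ⟨i, hi, j, hj, h⟩ := exists_rep p hp8 θ hθ m hm
    have h' : m % p = θ ^ (i + 4 * j) % p := by
      apply (ZMod.natCast_eq_natCast_iff' _ _ p).1
      rw [h]; push_cast; rfl
    have key : m % p ∈ cycD p θ 1 ↔ i = 1 := by
      constructor
      · intro hc
        obtain ⟨j', hj', e⟩ := mem_image.1 hc
        rw [h'] at e
        exact (cyc_inj p hp8 θ hθ 1 (by norm_num) i hi j' j (by simpa using hj') hj e).1.symm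
      · rintro rfl
        exact mem_image.2 ⟨j, by simpa using hj, h'.symm⟩
    have hu : IsUnit (m : ZMod p) := isUnit_iff_ne_zero.2 hm
    have e1 : (1 : MulChar (ZMod p) ℂ) m = 1 := MulChar.one_apply hu
    rw [MulChar.pow_apply' _ (by norm_num), MulChar.pow_apply' _ (by norm_num), e1, h, chi_pow hχ]
    simp only [key]
    have := Complex.I_sq
    interval_cases i <;> norm_num <;> grind

lemma detect0 (p : ℕ) [Fact p.Prime] {θ : ℕ} {χ : MulChar (ZMod p) ℂ}
    (hχ : χ (θ : ZMod p) = Complex.I) (h0 : (θ : ZMod p) ≠ 0) (i j : ℕ) (hi : i < 4) :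
    (4 * (if i = 0 then 1 else 0) : ℂ) = (1 : MulChar (ZMod p) ℂ) ((θ : ZMod p) ^ (i + 4 * j))
      + χ ((θ : ZMod p) ^ (i + 4 * j)) + (χ ^ 2) ((θ : ZMod p) ^ (i + 4 * j))
      + (χ ^ 3) ((θ : ZMod p) ^ (i + 4 * j)) := by
  have hu : IsUnit ((θ : ZMod p) ^ (i + 4 * j)) := isUnit_iff_ne_zero.2 (pow_ne_zero _ h0)
  rw [MulChar.one_apply hu, MulChar.pow_apply' _ (by norm_num), MulChar.pow_apply' _ (by norm_num),
    chi_pow hχ]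
  have := Complex.I_sq
  interval_cases i <;> norm_num <;> grind

lemma jac_shift (p : ℕ) [Fact p.Prime] (φ ρ : MulChar (ZMod p) ℂ) :
    ∑ a, φ a * ρ (a + 1) = φ (-1) * jacobiSum φ ρ := by
  unfold jacobiSum
  rw [mul_sum, ← Equiv.sum_comp (Equiv.neg (ZMod p))]
  apply sum_congr rfl
  intro a _
  simp only [Equiv.neg_apply]
  rw [neg_eq_neg_one_mul, map_mul, mul_assoc]
  congr 3; ring

lemma card_eq (p : ℕ) [Fact p.Prime] (hp8 : p % 8 = 5) (θ : ℕ)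
    (hθ : IsPrimitiveRoot (θ : ZMod p) (p - 1)) {χ : MulChar (ZMod p) ℂ}
    (hχ : χ (θ : ZMod p) = Complex.I) :
    (16 * ((cycD p θ 0).filter (fun a => (a + 1) % p ∈ cycD p θ 1)).card : ℂ)
    = ∑ a, ((1 : MulChar (ZMod p) ℂ) a + χ a + (χ ^ 2) a + (χ ^ 3) a) *
      ((1 : MulChar (ZMod p) ℂ) (a + 1) - Complex.I * χ (a + 1) - (χ ^ 2) (a + 1)
        + Complex.I * (χ ^ 3) (a + 1)) := by
  have h0 := theta_ne p hp8 θ hθ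
  rw [sum_univ_pow p hp8 θ hθ _ (by simp [MulChar.map_zero])]
  simp only [← detect0 p hχ h0 _ _ (show 0 < 4 by norm_num),
    ← detect0 p hχ h0 _ _ (show 1 < 4 by norm_num),
    ← detect0 p hχ h0 _ _ (show 2 < 4 by norm_num),
    ← detect0 p hχ h0 _ _ (show 3 < 4 by norm_num)]
  norm_num only [if_true, if_false, mul_zero, zero_mul, add_zero, mul_one]
  rw [← sum_cyc p hp8 θ hθ 0 (by norm_num) (fun a => 4 * ((1 : MulChar (ZMod p) ℂ) (a + 1) - Complex.I * χ (a + 1) - (χ ^ 2) (a + 1)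
        + Complex.I * (χ ^ 3) (a + 1)))]
  have : ∀ t : ℕ, (4 * ((1 : MulChar (ZMod p) ℂ) ((t : ZMod p) + 1) - Complex.I * χ ((t : ZMod p) + 1) - (χ ^ 2) ((t : ZMod p) + 1)
        + Complex.I * (χ ^ 3) ((t : ZMod p) + 1))) = 16 * (if (t + 1) % p ∈ cycD p θ 1 then 1 else 0) := by
    intro t
    have := detect p hp8 θ hθ hχ (t + 1)
    push_cast at this
    rw [← this]; ring
  simp only [this, ← mul_sum]
  rw [card_filter]
  push_cast
  rfl

lemma core (p : ℕ) [Fact p.Prime] (hp8 : p % 8 = 5) (θ : ℕ)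
    (hθ : IsPrimitiveRoot (θ : ZMod p) (p - 1)) {χ : MulChar (ZMod p) ℂ}
    (hχ : χ (θ : ZMod p) = Complex.I) (ψ : AddChar (ZMod p) ℂ) (hψ : ψ.IsPrimitive) :
    ∃ a b : ℤ, a ^ 2 + b ^ 2 = p ∧
      (16 * (((cycD p θ 0).filter (fun a => (a + 1) % p ∈ cycD p θ 1)).card : ℤ)
        = (p : ℤ) + 1 - 2 * a - 4 * b) ∧
      gaussSum χ ψ * gaussSum (χ ^ 3) ψ = -p ∧
      gaussSum (χ ^ 2) ψ ^ 2 = p ∧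
      gaussSum χ ψ ^ 2 = (a + b * Complex.I) * gaussSum (χ ^ 2) ψ ∧
      gaussSum (χ ^ 3) ψ ^ 2 = (a - b * Complex.I) * gaussSum (χ ^ 2) ψ := by
  have h4 := chi_four p hp8 θ hθ hχ
  have hm1 := chi_neg_one p hp8 θ hθ hχ
  have hII := Complex.I_sq
  have hp0 : (p : ℂ) ≠ 0 := by exact_mod_cast (show p ≠ 0 by omega)
  have hcard : (Fintype.card (ZMod p) : ℂ) = p := by rw [ZMod.card]
  have t2 : (χ ^ 2) (θ : ZMod p) = -1 := by
    rw [MulChar.pow_apply' _ (by norm_num), hχ, hII]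
  have t3 : (χ ^ 3) (θ : ZMod p) = -Complex.I := by
    rw [MulChar.pow_apply' _ (by norm_num), hχ, Complex.I_pow_three]
  have hu : IsUnit (θ : ZMod p) := isUnit_iff_ne_zero.2 (theta_ne p hp8 θ hθ)
  have n1 : χ ≠ 1 := by
    rintro h
    rw [h, MulChar.one_apply hu] at hχ
    simpa using congrArg Complex.re hχ
  have n2 : χ ^ 2 ≠ 1 := by
    intro h
    rw [h, MulChar.one_apply hu] at t2
    norm_num at t2
  have n3 : χ ^ 3 ≠ 1 := by
    intro h
    rw [h, MulChar.one_apply hu] at t3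
    simpa using congrArg Complex.re t3
  have i1 : χ⁻¹ = χ ^ 3 := inv_eq_of_mul_eq_one_right (by rw [← h4]; group)
  have i3 : (χ ^ 3)⁻¹ = χ := inv_eq_of_mul_eq_one_right (by rw [← h4]; group)
  have i2 : (χ ^ 2)⁻¹ = χ ^ 2 := inv_eq_of_mul_eq_one_right (by rw [← h4]; group)
  have m11 : χ * χ = χ ^ 2 := (pow_two χ).symm
  have m12 : χ * χ ^ 2 = χ ^ 3 := by group
  have m33 : χ ^ 3 * χ ^ 3 = χ ^ 2 := by
    rw [show χ ^ 3 * χ ^ 3 = χ ^ 4 * χ ^ 2 by group, h4, one_mul]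
  have m32 : χ ^ 3 * χ ^ 2 = χ := by
    rw [show χ ^ 3 * χ ^ 2 = χ ^ 4 * χ by group, h4, one_mul]
  have v2 : (χ ^ 2) (-1) = 1 := by rw [MulChar.pow_apply' _ (by norm_num), hm1]; norm_num
  have v3 : (χ ^ 3) (-1) = -1 := by rw [MulChar.pow_apply' _ (by norm_num), hm1]; norm_num
  have v0 : (1 : MulChar (ZMod p) ℂ) (-1) = 1 := MulChar.one_apply (by simp)
  have G13 : gaussSum χ ψ * gaussSum (χ ^ 3) ψ = -p := by
    have e1 := gaussSum_mul_gaussSum_eq_card n1 hψ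
    have e2 := mul_gaussSum_inv_eq_gaussSum (χ ^ 3) ψ
    rw [v3] at e2
    rw [i1, hcard] at e1
    rw [← e2, ← e1]; ring
  have G22 : gaussSum (χ ^ 2) ψ ^ 2 = p := by
    have e1 := gaussSum_mul_gaussSum_eq_card n2 hψ
    have e2 := mul_gaussSum_inv_eq_gaussSum (χ ^ 2) ψ
    rw [v2, one_mul] at e2
    rw [i2, hcard, e2] at e1
    rw [← e1]; ring
  have J11 := jacobiSum_mul_nontrivial (χ := χ) (φ := χ) (by rw [m11]; exact n2) ψ
  have J12 := jacobiSum_mul_nontrivial (χ := χ) (φ := χ ^ 2) (by rw [m12]; exact n3) ψ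
  have J33 := jacobiSum_mul_nontrivial (χ := χ ^ 3) (φ := χ ^ 3) (by rw [m33]; exact n2) ψ
  have J32 := jacobiSum_mul_nontrivial (χ := χ ^ 3) (φ := χ ^ 2) (by rw [m32]; exact n1) ψ
  rw [m11] at J11
  rw [m12] at J12
  rw [m33] at J33
  rw [m32] at J32
  have J13 := jacobiSum_nontrivial_inv n1
  have J22 := jacobiSum_nontrivial_inv n2
  have J31 := jacobiSum_nontrivial_inv n3
  rw [i1, hm1] at J13
  rw [i2, v2] at J22
  rw [i3, v3] at J31
  have J01 := jacobiSum_one_nontrivial n1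
  have J02 := jacobiSum_one_nontrivial n2
  have J03 := jacobiSum_one_nontrivial n3
  have J10 := J01
  have J20 := J02
  have J30 := J03
  have J21 := jacobiSum_comm (χ ^ 2) χ
  have J23 := jacobiSum_comm (χ ^ 2) (χ ^ 3)
  rw [jacobiSum_comm] at J10 J20 J30
  have J00 := jacobiSum_one_one (F := ZMod p) (R := ℂ)
  rw [hcard] at J00
  -- conjugate
  have hconj : jacobiSum (χ ^ 3) (χ ^ 3) = star (jacobiSum χ χ) := by
    unfold jacobiSum
    rw [star_sum]
    apply sum_congr rfl
    intro a _
    rw [star_mul, MulChar.star_apply', MulChar.star_apply', i1, mul_comm]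
  -- integrality
  have hint : jacobiSum χ χ ∈ GaussianInt.toComplex.range := by
    have hv : ∀ a, χ a ∈ GaussianInt.toComplex.range := by
      intro a
      by_cases ha : a = 0
      · rw [ha, MulChar.map_zero]; exact zero_mem _
      · obtain ⟨i, hi, j, hj, h⟩ := exists_rep p hp8 θ hθ a ha
        rw [h, chi_pow hχ]
        apply pow_mem
        exact ⟨⟨0, 1⟩, by simp [GaussianInt.toComplex_def]⟩
    exact sum_mem fun a _ => mul_mem (hv _) (hv _)
  obtain ⟨⟨a, b⟩, hab⟩ := hint
  have hJ : jacobiSum χ χ = a + b * Complex.I := by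
    rw [← hab]; simp [GaussianInt.toComplex_def]
  have hJ' : jacobiSum (χ ^ 3) (χ ^ 3) = a - b * Complex.I := by
    rw [hconj, hJ]; simp [sub_eq_add_neg]
  clear hab hconj
  rw [hJ] at J11
  rw [hJ'] at J33
  have K12 : jacobiSum χ (χ ^ 2) = -(a + b * Complex.I) := by
    apply mul_left_cancel₀ hp0
    linear_combination -gaussSum χ ψ * J12 + jacobiSum χ (χ ^ 2) * G13
      + gaussSum (χ ^ 2) ψ * J11 - (a + b * Complex.I) * G22
  have K32 : jacobiSum (χ ^ 3) (χ ^ 2) = -(a - b * Complex.I) := by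
    apply mul_left_cancel₀ hp0
    linear_combination -gaussSum (χ ^ 3) ψ * J32 + jacobiSum (χ ^ 3) (χ ^ 2) * G13
      + gaussSum (χ ^ 2) ψ * J33 - (a - b * Complex.I) * G22
  refine ⟨a, b, ?_, ?_, G13, G22, ?_, ?_⟩
  · have : ((a : ℂ) ^ 2 + b ^ 2) = p := by
      apply mul_left_cancel₀ hp0
      have e : (gaussSum χ ψ * gaussSum (χ ^ 3) ψ) ^ 2 = (p : ℂ) ^ 2 := by rw [G13]; ring
      have e2 : (p : ℂ) * ((a + b * Complex.I) * (a - b * Complex.I)) = p * p := by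
        linear_combination e - (a + b * Complex.I) * (a - b * Complex.I) * G22
          + (a - b * Complex.I) * gaussSum (χ ^ 2) ψ * J11
          + gaussSum χ ψ ^ 2 * J33
      linear_combination e2 + p * b ^ 2 * hII
    exact_mod_cast this
  · have hc := card_eq p hp8 θ hθ hχ
    have ex : ∀ t : ZMod p, ((1 : MulChar (ZMod p) ℂ) t + χ t + (χ ^ 2) t + (χ ^ 3) t) *
      ((1 : MulChar (ZMod p) ℂ) (t + 1) - Complex.I * χ (t + 1) - (χ ^ 2) (t + 1)
        + Complex.I * (χ ^ 3) (t + 1)) =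
      ((1 : MulChar (ZMod p) ℂ) t * (1 : MulChar (ZMod p) ℂ) (t + 1)
      + χ t * (1 : MulChar (ZMod p) ℂ) (t + 1)
      + (χ ^ 2) t * (1 : MulChar (ZMod p) ℂ) (t + 1)
      + (χ ^ 3) t * (1 : MulChar (ZMod p) ℂ) (t + 1))
      + -Complex.I * ((1 : MulChar (ZMod p) ℂ) t * χ (t + 1) + χ t * χ (t + 1)
      + (χ ^ 2) t * χ (t + 1) + (χ ^ 3) t * χ (t + 1))
      + -1 * ((1 : MulChar (ZMod p) ℂ) t * (χ ^ 2) (t + 1) + χ t * (χ ^ 2) (t + 1)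
      + (χ ^ 2) t * (χ ^ 2) (t + 1) + (χ ^ 3) t * (χ ^ 2) (t + 1))
      + Complex.I * ((1 : MulChar (ZMod p) ℂ) t * (χ ^ 3) (t + 1) + χ t * (χ ^ 3) (t + 1)
      + (χ ^ 2) t * (χ ^ 3) (t + 1) + (χ ^ 3) t * (χ ^ 3) (t + 1)) := by
      intro t; ring
    rw [sum_congr rfl (fun t _ => ex t)] at hc
    simp only [sum_add_distrib, ← mul_sum, jac_shift, v0, hm1, v2, v3, J00, J01, J02, J03, J10,
      J20, J30, J13, J22, J31, J21, J23, K12, K32, hJ, hJ'] at hc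
    have : (16 * (((cycD p θ 0).filter (fun a => (a + 1) % p ∈ cycD p θ 1)).card : ℂ)
        = (p : ℂ) + 1 - 2 * a - 4 * b) := by
      rw [hc]
      linear_combination 4 * b * hII
    exact_mod_cast this
  · linear_combination -J11
  · linear_combination -J33

lemma arith (p : ℕ) (hp : p.Prime) (a b x y : ℤ) (h1 : a ^ 2 + b ^ 2 = p)
    (h2 : (p : ℤ) = x ^ 2 + 4 * y ^ 2) (h3 : (p : ℤ) + 1 - 2 * a - 4 * b = p + 1 + 2 * x - 8 * y) :
    b = 2 * y := by
  by_contra hne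
  have ha : a = -x + 4 * y - 2 * b := by linarith
  have h4 : (b - 2 * y) * (5 * b + 4 * x - 6 * y) = 0 := by
    rw [ha] at h1; linear_combination h1 + h2
  have h5 : 5 * b + 4 * x - 6 * y = 0 := by
    rcases mul_eq_zero.1 h4 with h | h
    · exact absurd (by linarith) hne
    · exact h
  obtain ⟨k, hk⟩ : ∃ k, x = 4 * y + 5 * k := ⟨(x - 4 * y) / 5, by omega⟩
  have h5p : (5 : ℤ) ∣ p := ⟨4 * y ^ 2 + 8 * y * k + 5 * k ^ 2, by rw [h2, hk]; ring⟩
  have h5p' : 5 ∣ p := by exact_mod_cast h5p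
  have hp5 : p = 5 := ((Nat.prime_dvd_prime_iff_eq (by norm_num) hp).1 h5p').symm
  subst hp5
  have : y ^ 2 ≤ 1 := by push_cast at h2; nlinarith
  have hy1 : y ≤ 1 := by nlinarith
  have hy2 : -1 ≤ y := by nlinarith
  have hx1 : x ≤ 2 := by push_cast at h2; nlinarith
  have hx2 : -2 ≤ x := by push_cast at h2; nlinarith
  interval_cases y <;> interval_cases x <;> omega

theorem lemma5_part2
    (p : ℕ) (hp : p.Prime) (hp8 : p % 8 = 5)
    (x y : ℤ) (hx : x % 4 = 1) (hxy : (p : ℤ) = x ^ 2 + 4 * y ^ 2)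
    (θ : ℕ) (hθ : IsPrimitiveRoot (θ : ZMod p) (p - 1))
    (hy : 16 * (((cycD p θ 0).filter (fun a => (a + 1) % p ∈ cycD p θ 1)).card : ℤ)
        = (p : ℤ) + 1 + 2 * x - 8 * y)
    :
    4 * (1 + eta4 p θ 2 + 2 * eta4 p θ 1 + 3 * eta4 p θ 0) * (1 + eta4 p θ 0 + 2 * eta4 p θ 3 + 3 * eta4 p θ 2)
      ≡ -2 * (1 + 4 * y) * Hval p θ + 5 * (p : ℤ) + 1 [ZMOD ((4 : ℤ) ^ p - 1) / 3] := by
  have : Fact p.Prime := ⟨hp⟩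
  have : NeZero p := ⟨hp.ne_zero⟩
  have hζ := Complex.isPrimitiveRoot_exp p hp.ne_zero
  set ζ := Complex.exp (2 * Real.pi * Complex.I / p)
  let ψ : AddChar (ZMod p) ℂ := AddChar.zmodChar p hζ.pow_eq_one
  have hψ : ψ.IsPrimitive := AddChar.zmodChar_primitive_of_primitive_root p hζ
  have hψv : ∀ t : ℕ, ψ (t : ZMod p) = ζ ^ t := fun t => AddChar.zmodChar_apply' hζ.pow_eq_one t
  obtain ⟨χ, hχ⟩ := exists_char p hp8 θ hθ
  obtain ⟨a, b, hab, hc, G13, G22, G11, G33⟩ := core p hp8 θ hθ hχ ψ hψ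
  have hb := arith p hp a b x y hab hxy (by rw [← hc, hy])
  subst hb
  have hu : IsUnit (θ : ZMod p) := isUnit_iff_ne_zero.2 (theta_ne p hp8 θ hθ)
  have E0 := gauss_expand p hp8 θ hθ 1 1 (fun i j => by
    rw [MulChar.one_apply (hu.pow _), one_pow]) ψ
  have E1 := gauss_expand p hp8 θ hθ χ Complex.I (fun i j => chi_pow hχ i j) ψ
  have E2 := gauss_expand p hp8 θ hθ (χ ^ 2) (Complex.I ^ 2) (fun i j => by
    rw [MulChar.pow_apply' _ (by norm_num), chi_pow hχ, ← pow_mul, ← pow_mul, mul_comm]) ψ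
  have E3 := gauss_expand p hp8 θ hθ (χ ^ 3) (Complex.I ^ 3) (fun i j => by
    rw [MulChar.pow_apply' _ (by norm_num), chi_pow hχ, ← pow_mul, ← pow_mul, mul_comm]) ψ
  have hψ1 : ψ ≠ 1 := by
    intro h
    have h1 : ψ 1 = 1 := by rw [h]; rfl
    have h2 := hψv 1
    rw [Nat.cast_one, h1, pow_one] at h2
    exact hζ.ne_one hp.one_lt h2.symm
  rw [gaussSum_one_left hψ1] at E0
  simp only [hψv] at E0 E1 E2 E3
  let P : ℕ → Polynomial ℤ := fun i => ∑ t ∈ cycD p θ i, Polynomial.X ^ t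
  have hP4 : ∀ i, (P i).eval 4 = eta4 p θ i := by
    intro i; simp [P, eta4, Polynomial.eval_finsetSum]
  have hPζ : ∀ i, Polynomial.aeval ζ (P i) = ∑ t ∈ cycD p θ i, ζ ^ t := by
    intro i; simp [P]
  have hT := transfer p hp ζ hζ
    ((-2 * (1 + 4 * Polynomial.C y) * (P 0 + P 2 - P 1 - P 3) + 5 * Polynomial.C (p : ℤ) + 1)
      - 4 * (1 + P 2 + 2 * P 1 + 3 * P 0) * (1 + P 0 + 2 * P 3 + 3 * P 2)) ?_
  · apply (Int.modEq_iff_dvd).2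
    convert hT using 1
    simp only [Polynomial.eval_add, Polynomial.eval_sub, Polynomial.eval_mul, Polynomial.eval_C,
      hP4, Polynomial.eval_one, Polynomial.eval_ofNat, Polynomial.eval_neg, Hval]
  · simp only [map_add, map_sub, map_mul, map_neg, map_one, map_ofNat, Polynomial.aeval_C, hPζ]
    generalize (∑ t ∈ cycD p θ 0, ζ ^ t) = e0 at *
    generalize (∑ t ∈ cycD p θ 1, ζ ^ t) = e1 at *
    generalize (∑ t ∈ cycD p θ 2, ζ ^ t) = e2 at *
    generalize (∑ t ∈ cycD p θ 3, ζ ^ t) = e3 at *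
    have hI2 := Complex.I_sq
    have hI3 := Complex.I_pow_three
    simp only [hI2, hI3] at E1 E2 E3
    have F1 : gaussSum χ ψ = (e0 - e2) + Complex.I * (e1 - e3) := by rw [E1]; ring
    have F2 : gaussSum (χ ^ 2) ψ = e0 + e2 - e1 - e3 := by rw [E2]; ring
    have F3 : gaussSum (χ ^ 3) ψ = (e0 - e2) - Complex.I * (e1 - e3) := by
      rw [E3]; linear_combination (e2 - Complex.I * e3) * hI2
    rw [F1, F3] at G13
    rw [F2] at G22
    rw [F1, F2] at G11
    rw [F3, F2] at G33
    push_cast at G11 G33 ⊢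
    have A : (e0 - e2) ^ 2 + (e1 - e3) ^ 2 = -p := by
      linear_combination G13 + (e1 - e3) ^ 2 * hI2
    have B : (e0 - e2) * (e1 - e3) = y * (e0 + e2 - e1 - e3) := by
      apply mul_left_cancel₀ Complex.I_ne_zero
      linear_combination (G11 - G33) / 4
    have hs : e3 = -1 - e0 - e1 - e2 := by linear_combination -E0
    subst hs
    simp only [algebraMap_int_eq, eq_intCast, Int.cast_natCast]
    linear_combination -G22 + 4 * A + 8 * B
end

section
/- Part (5) of Lemma 5: 4·(η₃ + 2η₂ + 3η₁)·(η₁ + 2η₀ + 3η₃) ≡ 2(3+4y)·H + 5p + 9 (mod (4^p − 1)/3). -/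
open Finset

namespace L5

lemma num_unique (p : ℕ) (hp : p.Prime) (x y s t : ℤ) (hx : x % 4 = 1) (hs : s % 4 = 1)
    (hxy : (p : ℤ) = x ^ 2 + 4 * y ^ 2) (hst : (p : ℤ) = s ^ 2 + 4 * t ^ 2)
    (h : 2 * x - 8 * y = 2 * s - 8 * t) : y = t := by
  obtain ⟨d, rfl⟩ : ∃ d, y = t + d := ⟨y - t, by ring⟩
  have hx' : x = s + 4 * d := by linarith
  subst hx'
  have h1 : d * (2 * s + 2 * t + 5 * d) = 0 := by nlinarith
  rcases mul_eq_zero.1 h1 with h0 | h0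
  · simp [h0]
  obtain ⟨e, rfl⟩ : ∃ e, d = 2 * e := ⟨d / 2, by omega⟩
  have hs' : s = -t - 5 * e := by linarith
  have h5 : (5 : ℤ) ∣ (p : ℤ) := ⟨t ^ 2 + 2 * t * e + 5 * e ^ 2, by rw [hst, hs']; ring⟩
  have h5' : 5 ∣ p := by exact_mod_cast h5
  have hp5 : p = 5 := ((Nat.prime_dvd_prime_iff_eq (by norm_num) hp).1 h5').symm
  subst hp5
  have aux : ∀ a b : ℤ, a % 4 = 1 → ((5 : ℕ) : ℤ) = a ^ 2 + 4 * b ^ 2 → a = 1 := by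
    intro a b ha hab
    push_cast at hab
    have : a < 3 := by nlinarith [sq_nonneg b]
    have : -3 < a := by nlinarith [sq_nonneg b]
    omega
  have := aux _ _ hx hxy
  have := aux _ _ hs hst
  omega

lemma num_mod (p : ℕ) (hp8 : p % 8 = 5) (a b M : ℤ) (ha : a % 2 = 1)
    (h : (p : ℤ) = a ^ 2 + 4 * b ^ 2) (hM : 16 * M = p + 1 - 2 * a - 8 * b) : (-a) % 4 = 1 := by
  have hp' : (p : ℤ) % 8 = 5 := by omega
  obtain ⟨c, rfl⟩ : ∃ c, a = 2 * c + 1 := ⟨a / 2, by omega⟩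
  rcases Int.even_or_odd' b with ⟨d, rfl | rfl⟩
  · exfalso
    obtain ⟨k, hk⟩ := Int.even_mul_succ_self c
    have : (p : ℤ) = 4 * (c * (c + 1)) + 1 + 16 * d ^ 2 := by rw [h]; ring
    rw [hk] at this
    omega
  · obtain ⟨k, hk⟩ := Int.even_mul_succ_self d
    have e1 : (p : ℤ) = 4 * c ^ 2 + 4 * c + 5 + 16 * (d * (d + 1)) := by rw [h]; ring
    rw [hk] at e1
    rcases Int.even_or_odd' c with ⟨m, rfl | rfl⟩
    · exfalso
      have : 16 * M = 16 * m ^ 2 + 4 + 16 * (k + k) - 8 * (2 * d + 1) := by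
        rw [hM, e1]; ring
      omega
    · omega

lemma transfer (p : ℕ) (hp : p.Prime) (ζ : ℂ) (hζ : IsPrimitiveRoot ζ p)
    (P : Polynomial ℤ) (hP : Polynomial.aeval ζ P = 0) :
    ((4 : ℤ) ^ p - 1) / 3 ∣ P.eval 4 := by
  have : Fact p.Prime := ⟨hp⟩
  have h1 : Polynomial.cyclotomic p ℤ ∣ P := by
    rw [Polynomial.cyclotomic_eq_minpoly hζ hp.pos]
    exact minpoly.isIntegrallyClosed_dvd (hζ.isIntegral hp.pos) hP
  have h2 := Polynomial.eval_dvd (x := (4 : ℤ)) h1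
  have h3 : ((4 : ℤ) ^ p - 1) / 3 = (Polynomial.cyclotomic p ℤ).eval 4 := by
    rw [Polynomial.cyclotomic_prime, Polynomial.eval_finsetSum]
    simp only [Polynomial.eval_pow, Polynomial.eval_X]
    have := geom_sum_mul (4 : ℤ) p
    omega
  rwa [h3]

lemma gauss_int (z : ℂ) (hz : z ∈ Algebra.adjoin ℤ {Complex.I}) :
    ∃ m n : ℤ, z = m + n * Complex.I := by
  induction hz using Algebra.adjoin_induction with
  | mem x hx => exact ⟨0, 1, by simp_all⟩
  | algebraMap r => exact ⟨r, 0, by simp⟩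
  | add x y _ _ hx hy =>
    obtain ⟨a, b, rfl⟩ := hx
    obtain ⟨c, d, rfl⟩ := hy
    exact ⟨a + c, b + d, by push_cast; ring⟩
  | mul x y _ _ hx hy =>
    obtain ⟨a, b, rfl⟩ := hx
    obtain ⟨c, d, rfl⟩ := hy
    refine ⟨a * c - b * d, a * d + b * c, ?_⟩
    push_cast
    linear_combination (b * d : ℂ) * Complex.I_sq

lemma prim_I : IsPrimitiveRoot Complex.I 4 := Complex.isPrimitiveRoot_I

lemma exists_char (p : ℕ) [Fact p.Prime] (hp8 : p % 8 = 5) (θ : ℕ)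
    (hθ : IsPrimitiveRoot (θ : ZMod p) (p - 1)) :
    (∀ a : ZMod p, a ≠ 0 → ∃ k < p - 1, a = (θ : ZMod p) ^ k) ∧
    ∃ χ : MulChar (ZMod p) ℂ, χ (θ : ZMod p) = Complex.I := by
  have hp := Fact.out (p := p.Prime)
  have hp1 : 0 < p - 1 := by have := hp.two_le; omega
  have : NeZero (p - 1) := ⟨hp1.ne'⟩
  have key : ∀ a : ZMod p, a ≠ 0 → ∃ k < p - 1, a = (θ : ZMod p) ^ k := by
    intro a ha
    obtain ⟨i, hi, h⟩ := hθ.eq_pow_of_pow_eq_one (ZMod.pow_card_sub_one_eq_one ha)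
    exact ⟨i, hi, h.symm⟩
  refine ⟨key, ?_⟩
  obtain ⟨g, hg⟩ := hθ.isUnit hp1.ne'
  have hgen : ∀ u : (ZMod p)ˣ, u ∈ Subgroup.zpowers g := by
    intro u
    obtain ⟨k, _, hk⟩ := key u u.ne_zero
    refine ⟨k, ?_⟩
    ext
    simp [hk, hg]
  have hI : (Units.mk0 Complex.I Complex.I_ne_zero) ∈
      rootsOfUnity (Fintype.card (ZMod p)ˣ) ℂ := by
    rw [mem_rootsOfUnity, ZMod.card_units_eq_totient, Nat.totient_prime hp]
    ext
    simp only [Units.val_pow_eq_pow_val, Units.val_mk0, Units.val_one]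
    exact (prim_I.pow_eq_one_iff_dvd _).2 (by omega)
  refine ⟨MulChar.ofRootOfUnity hI hgen, ?_⟩
  rw [← hg, MulChar.ofRootOfUnity_spec]
  rfl

lemma mem_cycD (p : ℕ) [Fact p.Prime] (hp8 : p % 8 = 5) (θ : ℕ)
    (hk : ∀ a : ZMod p, a ≠ 0 → ∃ k < p - 1, a = (θ : ZMod p) ^ k)
    (χ : MulChar (ZMod p) ℂ) (hχ : χ (θ : ZMod p) = Complex.I) (i : ℕ) (hi : i < 4) (t : ℕ) :
    t ∈ cycD p θ i ↔ t < p ∧ χ (t : ZMod p) = Complex.I ^ i := by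
  have hp := Fact.out (p := p.Prime)
  simp only [cycD, Finset.mem_image, Finset.mem_range]
  constructor
  · rintro ⟨j, hj, rfl⟩
    refine ⟨Nat.mod_lt _ hp.pos, ?_⟩
    rw [ZMod.natCast_mod, Nat.cast_pow, map_pow, hχ, pow_add, pow_mul, Complex.I_pow_four,
      one_pow, mul_one]
  · rintro ⟨ht, h⟩
    have h0 : (t : ZMod p) ≠ 0 := by
      intro h0
      rw [h0, MulChar.map_zero] at h
      exact pow_ne_zero i Complex.I_ne_zero h.symm
    obtain ⟨k, hkp, hk'⟩ := hk _ h0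
    have h1 : Complex.I ^ k = Complex.I ^ i := by rw [← h, hk', map_pow, hχ]
    have h2 : Complex.I ^ k = Complex.I ^ (k % 4) := by
      conv_lhs => rw [← Nat.div_add_mod k 4]
      rw [pow_add, pow_mul, Complex.I_pow_four, one_pow, one_mul]
    have h3 : k % 4 = i :=
      prim_I.pow_inj (Nat.mod_lt _ (by norm_num)) hi (h2.symm.trans h1)
    refine ⟨k / 4, by omega, ?_⟩
    have : i + 4 * (k / 4) = k := by omega
    rw [this]
    have h4 : ((θ ^ k : ℕ) : ZMod p) = (t : ZMod p) := by rw [hk']; push_cast; rfl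
    rw [ZMod.natCast_eq_natCast_iff'] at h4
    rw [h4, Nat.mod_eq_of_lt ht]

open Classical in
lemma sum_cycD (p : ℕ) [Fact p.Prime] (hp8 : p % 8 = 5) (θ : ℕ)
    (hk : ∀ a : ZMod p, a ≠ 0 → ∃ k < p - 1, a = (θ : ZMod p) ^ k)
    (χ : MulChar (ZMod p) ℂ) (hχ : χ (θ : ZMod p) = Complex.I) (i : ℕ) (hi : i < 4)
    (f : ℕ → ℂ) :
    ∑ t ∈ cycD p θ i, f t =
      ∑ a : ZMod p, (if χ a = Complex.I ^ i then 1 else 0) * f a.val := by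
  have hp := Fact.out (p := p.Prime)
  simp only [ite_mul, one_mul, zero_mul]
  rw [← Finset.sum_filter]
  symm
  refine Finset.sum_bij' (fun a _ => a.val) (fun t _ => (t : ZMod p)) ?_ ?_ ?_ ?_ ?_
  · intro a ha
    rw [mem_cycD p hp8 θ hk χ hχ i hi]
    simp only [Finset.mem_filter, Finset.mem_univ, true_and] at ha
    refine ⟨ZMod.val_lt a, ?_⟩
    rwa [ZMod.natCast_zmod_val]
  · intro t ht
    rw [mem_cycD p hp8 θ hk χ hχ i hi] at ht
    simp [ht.2]
  · intro a _
    simp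
  · intro t ht
    rw [mem_cycD p hp8 θ hk χ hχ i hi] at ht
    exact ZMod.val_cast_of_lt ht.1
  · intro a _; rfl

lemma char_vals (p : ℕ) [Fact p.Prime] (θ : ℕ)
    (hk : ∀ a : ZMod p, a ≠ 0 → ∃ k < p - 1, a = (θ : ZMod p) ^ k)
    (χ : MulChar (ZMod p) ℂ) (hχ : χ (θ : ZMod p) = Complex.I) (a : ZMod p) :
    (χ a = 0 ∧ (1 : MulChar (ZMod p) ℂ) a = 0) ∨
    ((1 : MulChar (ZMod p) ℂ) a = 1 ∧
      (χ a = 1 ∨ χ a = Complex.I ∨ χ a = -1 ∨ χ a = -Complex.I)) := by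
  by_cases h0 : a = 0
  · left; subst h0; simp [MulChar.map_zero]
  · right
    refine ⟨MulChar.one_apply (isUnit_iff_ne_zero.2 h0), ?_⟩
    obtain ⟨k, _, rfl⟩ := hk a h0
    rw [map_pow, hχ]
    have : Complex.I ^ k = Complex.I ^ (k % 4) := by
      conv_lhs => rw [← Nat.div_add_mod k 4]
      rw [pow_add, pow_mul, Complex.I_pow_four, one_pow, one_mul]
    rw [this]
    have h4 : k % 4 < 4 := Nat.mod_lt _ (by norm_num)
    interval_cases k % 4
    · simp
    · simp
    · simp
    · right; right; right; rw [pow_succ, Complex.I_sq]; ring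

open Classical in
lemma indicators (p : ℕ) [Fact p.Prime] (θ : ℕ)
    (hk : ∀ a : ZMod p, a ≠ 0 → ∃ k < p - 1, a = (θ : ZMod p) ^ k)
    (χ : MulChar (ZMod p) ℂ) (hχ : χ (θ : ZMod p) = Complex.I) (a : ZMod p) (i : ℕ) (hi : i < 4) :
    4 * (if χ a = Complex.I ^ i then (1 : ℂ) else 0) =
      (1 : MulChar (ZMod p) ℂ) a + (-Complex.I) ^ i * χ a + (-1) ^ i * (χ ^ 2) a
        + Complex.I ^ i * (χ ^ 3) a := by
  rw [MulChar.pow_apply' _ (by norm_num), MulChar.pow_apply' _ (by norm_num)]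
  have hI3 : Complex.I ^ 3 = -Complex.I := by rw [pow_succ, Complex.I_sq]; ring
  have hI6 : Complex.I ^ 6 = -1 := by
    rw [show 6 = 4 + 2 by norm_num, pow_add, Complex.I_pow_four, Complex.I_sq]; ring
  have d1 : Complex.I ≠ 1 := by simp [Complex.ext_iff]
  have d2 : Complex.I ≠ -1 := by simp [Complex.ext_iff]
  have d3 : Complex.I ≠ -Complex.I := by simp [Complex.ext_iff]; norm_num
  have d4 : (1 : ℂ) ≠ -1 := by norm_num
  have d5 : (1 : ℂ) ≠ -Complex.I := by simp [Complex.ext_iff]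
  have d6 : (-1 : ℂ) ≠ -Complex.I := by simp [Complex.ext_iff]
  rcases char_vals p θ hk χ hχ a with ⟨h1, h2⟩ | ⟨h1, h2 | h2 | h2 | h2⟩ <;> rw [h1, h2] <;>
    interval_cases i <;> 
    simp only [pow_zero, pow_one, Complex.I_sq, hI3, d1, d2, d3, d4, d5, d6, d1.symm, d2.symm,
      d3.symm, d4.symm, d5.symm, d6.symm, if_true, if_false, zero_eq_neg, Complex.I_ne_zero, Complex.I_ne_zero.symm, zero_ne_one, one_ne_zero] <;>
    ring_nf <;> try simp only [Complex.I_pow_four, Complex.I_sq, hI3, hI6]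
  all_goals (first | (norm_num; done) | ring)

lemma chi_neg_one (p : ℕ) [Fact p.Prime] (hp8 : p % 8 = 5) (θ : ℕ)
    (hθ : IsPrimitiveRoot (θ : ZMod p) (p - 1))
    (hk : ∀ a : ZMod p, a ≠ 0 → ∃ k < p - 1, a = (θ : ZMod p) ^ k)
    (χ : MulChar (ZMod p) ℂ) (hχ : χ (θ : ZMod p) = Complex.I) : χ (-1) = -1 := by
  have : Fact (2 < p) := ⟨by omega⟩
  obtain ⟨k, hkp, h⟩ := hk (-1) (by simp)
  have h1 : (θ : ZMod p) ^ (2 * k) = 1 := by rw [mul_comm, pow_mul, ← h]; norm_num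
  have h2 := (hθ.pow_eq_one_iff_dvd _).1 h1
  have h3 : k ≠ 0 := by
    rintro rfl
    rw [pow_zero] at h
    exact ZMod.neg_one_ne_one h
  have h4 : 2 * k = p - 1 := by
    obtain ⟨c, hc⟩ := h2
    have : c = 1 := by
      have : c < 2 := by by_contra hcc; nlinarith [Nat.mul_le_mul_left (p - 1) (not_lt.1 hcc)]
      have : c ≠ 0 := by rintro rfl; omega
      omega
    subst this; omega
  rw [h, map_pow, hχ]
  obtain ⟨m, rfl⟩ : ∃ m, k = 4 * m + 2 := ⟨k / 4, by omega⟩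
  rw [pow_add, pow_mul, Complex.I_pow_four, one_pow, one_mul, Complex.I_sq]


open Classical in
lemma count_eq (p : ℕ) [Fact p.Prime] (hp8 : p % 8 = 5) (θ : ℕ)
    (hk : ∀ a : ZMod p, a ≠ 0 → ∃ k < p - 1, a = (θ : ZMod p) ^ k)
    (χ : MulChar (ZMod p) ℂ) (hχ : χ (θ : ZMod p) = Complex.I) (hneg : χ (-1) = -1) :
    16 * (((cycD p θ 0).filter (fun a => (a + 1) % p ∈ cycD p θ 1)).card : ℂ) =
      (jacobiSum (1 : MulChar (ZMod p) ℂ) 1 - Complex.I * jacobiSum 1 χ - jacobiSum 1 (χ ^ 2)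
        + Complex.I * jacobiSum 1 (χ ^ 3))
      - (jacobiSum χ 1 - Complex.I * jacobiSum χ χ - jacobiSum χ (χ ^ 2)
        + Complex.I * jacobiSum χ (χ ^ 3))
      + (jacobiSum (χ ^ 2) 1 - Complex.I * jacobiSum (χ ^ 2) χ - jacobiSum (χ ^ 2) (χ ^ 2)
        + Complex.I * jacobiSum (χ ^ 2) (χ ^ 3))
      - (jacobiSum (χ ^ 3) 1 - Complex.I * jacobiSum (χ ^ 3) χ - jacobiSum (χ ^ 3) (χ ^ 2)
        + Complex.I * jacobiSum (χ ^ 3) (χ ^ 3)) := by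
  have hp := Fact.out (p := p.Prime)
  rw [Finset.card_filter]
  push_cast
  rw [sum_cycD p hp8 θ hk χ hχ 0 (by norm_num)]
  have h1 : ∀ a : ZMod p, ((a.val + 1) % p ∈ cycD p θ 1) ↔ χ (a + 1) = Complex.I ^ 1 := by
    intro a
    rw [mem_cycD p hp8 θ hk χ hχ 1 (by norm_num)]
    simp [Nat.mod_lt _ hp.pos]
  simp only [h1]
  rw [← Equiv.sum_comp (Equiv.neg (ZMod p))]
  simp only [jacobiSum, Finset.mul_sum, ← Finset.sum_add_distrib, ← Finset.sum_sub_distrib]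
  refine Finset.sum_congr rfl fun b _ => ?_
  have e0 := indicators p θ hk χ hχ (-b) 0 (by norm_num)
  have e1 := indicators p θ hk χ hχ (1 - b) 1 (by norm_num)
  have n1 : χ (-b) = - χ b := by
    rw [neg_eq_neg_one_mul, map_mul, hneg]; ring
  have n2 : (χ ^ 2) (-b) = (χ ^ 2) b := by
    rw [MulChar.pow_apply' _ (by norm_num), MulChar.pow_apply' _ (by norm_num), n1]; ring
  have n3 : (χ ^ 3) (-b) = - (χ ^ 3) b := by
    rw [MulChar.pow_apply' _ (by norm_num), MulChar.pow_apply' _ (by norm_num), n1]; ring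
  have n0 : (1 : MulChar (ZMod p) ℂ) (-b) = (1 : MulChar (ZMod p) ℂ) b := by
    rw [neg_eq_neg_one_mul, map_mul, MulChar.one_apply (isUnit_one.neg), one_mul]
  rw [n0, n1, n2, n3] at e0
  have hb : Equiv.neg (ZMod p) b = -b := rfl
  have hb' : -b + 1 = 1 - b := by ring
  rw [hb, hb']
  calc _ = (4 * (if χ (-b) = Complex.I ^ 0 then (1 : ℂ) else 0)) *
        (4 * (if χ (1 - b) = Complex.I ^ 1 then (1 : ℂ) else 0)) := by ring
    _ = _ := by
      rw [e1, n1, e0]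
      ring

lemma main_id (p : ℕ) [Fact p.Prime] (hp8 : p % 8 = 5)
    (x y : ℤ) (hx : x % 4 = 1) (hxy : (p : ℤ) = x ^ 2 + 4 * y ^ 2)
    (θ : ℕ) (hθ : IsPrimitiveRoot (θ : ZMod p) (p - 1))
    (hy : 16 * (((cycD p θ 0).filter (fun a => (a + 1) % p ∈ cycD p θ 1)).card : ℤ)
        = (p : ℤ) + 1 + 2 * x - 8 * y) (ζ : ℂ) (hζ : ζ = ZMod.stdAddChar (1 : ZMod p))
    (e : ℕ → ℂ) (he : ∀ i, e i = ∑ t ∈ cycD p θ i, ζ ^ t) :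
    4 * (e 3 + 2 * e 2 + 3 * e 1) * (e 1 + 2 * e 0 + 3 * e 3) =
      2 * (3 + 4 * y) * (e 0 + e 2 - e 1 - e 3) + 5 * p + 9 := by
  classical
  have hp := Fact.out (p := p.Prime)
  obtain ⟨hk, χ, hχ⟩ := exists_char p hp8 θ hθ
  have hneg := chi_neg_one p hp8 θ hθ hk χ hχ
  set ψ : AddChar (ZMod p) ℂ := ZMod.stdAddChar with hψ
  have hprim : ψ.IsPrimitive := ZMod.isPrimitive_stdAddChar p
  have hcard : Fintype.card (ZMod p) = p := ZMod.card p
  have hp0 : (p : ℂ) ≠ 0 := by exact_mod_cast hp.ne_zero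
  have h4 : χ ^ 4 = 1 := by
    ext a
    rw [MulChar.pow_apply_coe]
    rcases char_vals p θ hk χ hχ a with ⟨h1, h2⟩ | ⟨h1, h2⟩
    · rw [h1, h2]; norm_num
    · rw [h1]
      rcases h2 with h2 | h2 | h2 | h2 <;> rw [h2] <;> norm_num [neg_pow]
  have hI2 : Complex.I ^ 2 = -1 := Complex.I_sq
  have hI3 : Complex.I ^ 3 = -Complex.I := by rw [pow_succ, Complex.I_sq]; ring
  have hn1 : χ ≠ 1 := by
    intro h
    rw [h, MulChar.one_apply isUnit_one.neg] at hneg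
    norm_num at hneg
  have hθu : IsUnit (θ : ZMod p) := hθ.isUnit (by omega)
  have hn2 : χ ^ 2 ≠ 1 := by
    intro h
    have := DFunLike.congr_fun h (θ : ZMod p)
    rw [MulChar.pow_apply' _ (by norm_num), hχ, MulChar.one_apply hθu, hI2] at this
    norm_num at this
  have hn3 : χ ^ 3 ≠ 1 := by
    intro h
    apply hn1
    calc χ = χ ^ 4 * (χ ^ 3)⁻¹ := by rw [eq_mul_inv_iff_mul_eq]; exact (pow_succ' χ 3).symm
      _ = 1 := by rw [h, h4]; simp
  have inv1 : χ⁻¹ = χ ^ 3 := inv_eq_of_mul_eq_one_right (by rw [← h4]; exact (pow_succ' χ 3).symm)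
  have inv2 : (χ ^ 2)⁻¹ = χ ^ 2 := inv_eq_of_mul_eq_one_right (by rw [← h4, ← pow_add])
  have m12 : χ * χ ^ 2 = χ ^ 3 := (pow_succ' χ 2).symm
  have m11 : χ * χ = χ ^ 2 := (pow_two χ).symm
  have m33 : χ ^ 3 * χ ^ 3 = χ ^ 2 := by
    rw [← pow_add, show 3 + 3 = 4 + 2 by norm_num, pow_add, h4, one_mul]
  have m32 : χ ^ 3 * χ ^ 2 = χ := by
    rw [← pow_add, show 3 + 2 = 4 + 1 by norm_num, pow_add, h4, one_mul, pow_one]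
  have hneg2 : (χ ^ 2) (-1) = 1 := by
    rw [MulChar.pow_apply' _ (by norm_num), hneg]; norm_num
  have hneg3 : (χ ^ 3) (-1) = -1 := by
    rw [MulChar.pow_apply' _ (by norm_num), hneg]; norm_num
  -- Gauss sums
  set g1 := gaussSum χ ψ with hg1
  set g2 := gaussSum (χ ^ 2) ψ with hg2
  set g3 := gaussSum (χ ^ 3) ψ with hg3
  have hg0 : gaussSum (1 : MulChar (ZMod p) ℂ) ψ = -1 := by
    apply gaussSum_one_left
    intro h
    have := hprim (one_ne_zero (α := ZMod p))
    apply this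
    rw [h]
    ext; simp
  have q22 : g2 ^ 2 = p := by
    have h := gaussSum_mul_gaussSum_eq_card hn2 hprim
    have h' := mul_gaussSum_inv_eq_gaussSum (χ ^ 2) ψ
    rw [hneg2, one_mul] at h'
    rw [inv2, h', hcard] at h
    rw [← h]; ring
  have q13 : g1 * g3 = -p := by
    have h := gaussSum_mul_gaussSum_eq_card hn1 hprim
    have h' := mul_gaussSum_inv_eq_gaussSum (χ ^ 3) ψ
    rw [hneg3] at h'
    rw [inv1, hcard] at h
    rw [← h, hg3, ← h']; ring
  have j11 := jacobiSum_mul_nontrivial (χ := χ) (φ := χ) (by rw [m11]; exact hn2) ψ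
  have j12 := jacobiSum_mul_nontrivial (χ := χ) (φ := χ ^ 2) (by rw [m12]; exact hn3) ψ
  have j33 := jacobiSum_mul_nontrivial (χ := χ ^ 3) (φ := χ ^ 3) (by rw [m33]; exact hn2) ψ
  have j32 := jacobiSum_mul_nontrivial (χ := χ ^ 3) (φ := χ ^ 2) (by rw [m32]; exact hn1) ψ
  rw [m11] at j11
  rw [m12] at j12
  rw [m33] at j33
  rw [m32] at j32
  rw [← hg1, ← hg2] at j11
  rw [← hg1, ← hg2, ← hg3] at j12
  rw [← hg2, ← hg3] at j33
  rw [← hg1, ← hg2, ← hg3] at j32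
  set J := jacobiSum χ χ with hJ
  set J' := jacobiSum (χ ^ 3) (χ ^ 3) with hJ'
  have k12 : jacobiSum χ (χ ^ 2) = -J := by
    apply mul_left_cancel₀ hp0
    linear_combination (jacobiSum χ (χ ^ 2)) * q13 - g1 * j12 + g2 * j11 - J * q22
  have k32 : jacobiSum (χ ^ 3) (χ ^ 2) = -J' := by
    apply mul_left_cancel₀ hp0
    linear_combination (jacobiSum (χ ^ 3) (χ ^ 2)) * q13 - g3 * j32 + g2 * j33 - J' * q22
  have hJJ : J * J' = p := by
    apply mul_left_cancel₀ hp0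
    linear_combination (-J * J') * q22 + g2 * J' * j11 + g1 ^ 2 * j33 + (g1 * g3 - p) * q13
  have hconj : J' = star J := by
    rw [hJ', hJ, jacobiSum, jacobiSum, star_sum]
    refine Finset.sum_congr rfl fun a _ => ?_
    rw [star_mul', MulChar.star_apply', MulChar.star_apply', inv1]
  obtain ⟨z, hz, hJz⟩ := exists_jacobiSum_eq_neg_one_add (n := 4) (by norm_num) h4 h4
    (by rw [hcard]; omega) prim_I
  obtain ⟨m, n, rfl⟩ := gauss_int z hz
  have hJab : J = ((2 * n - 1 : ℤ) : ℂ) + 2 * ((-m : ℤ) : ℂ) * Complex.I := by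
    rw [hJ, hJz]; push_cast
    linear_combination ((m : ℂ) + n * Complex.I - 2 * n) * hI2
  set a : ℤ := 2 * n - 1 with ha
  set b : ℤ := -m with hb
  have hJab' : J' = (a : ℂ) - 2 * (b : ℂ) * Complex.I := by
    rw [hconj, hJab]
    simp
    ring
  have hab : (p : ℤ) = a ^ 2 + 4 * b ^ 2 := by
    have : (p : ℂ) = (a : ℂ) ^ 2 + 4 * (b : ℂ) ^ 2 := by
      rw [← hJJ, hJab, hJab']
      linear_combination (-4 * (b : ℂ) ^ 2) * hI2
    exact_mod_cast this
  have hcount := count_eq p hp8 θ hk χ hχ hneg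
  have r13 : jacobiSum χ (χ ^ 3) = 1 := by
    rw [← inv1, jacobiSum_nontrivial_inv hn1, hneg]; norm_num
  have r22 : jacobiSum (χ ^ 2) (χ ^ 2) = -1 := by
    have := jacobiSum_nontrivial_inv hn2
    rwa [inv2, hneg2] at this
  rw [jacobiSum_comm χ 1, jacobiSum_comm (χ ^ 2) 1, jacobiSum_comm (χ ^ 3) 1,
    jacobiSum_comm (χ ^ 2) χ, jacobiSum_comm (χ ^ 3) χ, jacobiSum_comm (χ ^ 2) (χ ^ 3),
    jacobiSum_one_one, jacobiSum_one_nontrivial hn1, jacobiSum_one_nontrivial hn2,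
    jacobiSum_one_nontrivial hn3, r13, r22, k12, k32, ← hJ, ← hJ', hJab, hJab', hcard] at hcount
  set M := ((cycD p θ 0).filter (fun a => (a + 1) % p ∈ cycD p θ 1)).card with hM
  have hMc : 16 * (M : ℤ) = p + 1 - 2 * a - 8 * b := by
    have : 16 * (M : ℂ) = p + 1 - 2 * a - 8 * b := by
      rw [hcount]
      linear_combination (8 * (b : ℂ)) * hI2
    exact_mod_cast this
  have hs := num_mod p hp8 a b M (by omega) hab hMc
  have hyb : y = b := num_unique p hp x y (-a) b hx hs hxy (by rw [hab]; ring) (by linarith)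
  rw [hyb]
  have hE : ∀ i < 4, 4 * e i = -1 + (-Complex.I) ^ i * g1 + (-1) ^ i * g2
      + Complex.I ^ i * g3 := by
    intro i hi
    suffices h : 4 * e i = gaussSum (1 : MulChar (ZMod p) ℂ) ψ + (-Complex.I) ^ i * g1
        + (-1) ^ i * g2 + Complex.I ^ i * g3 by rw [h, hg0]
    rw [he, sum_cycD p hp8 θ hk χ hχ i hi, hg1, hg2, hg3]
    simp only [gaussSum, Finset.mul_sum, ← Finset.sum_add_distrib]
    refine Finset.sum_congr rfl fun c _ => ?_
    have hc : ζ ^ c.val = ψ c := by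
      rw [hζ, ← AddChar.map_nsmul_eq_pow, nsmul_eq_mul, mul_one, ZMod.natCast_zmod_val]
    rw [hc, ← mul_assoc, indicators p θ hk χ hχ c i hi]
    ring
  have e0 := hE 0 (by norm_num)
  have e1 := hE 1 (by norm_num)
  have e2 := hE 2 (by norm_num)
  have e3 := hE 3 (by norm_num)
  have s2 : (-Complex.I) ^ 2 = -1 := by rw [neg_sq, hI2]
  have s3 : (-Complex.I) ^ 3 = Complex.I := by
    rw [pow_succ, s2]; ring
  rw [s2, hI2] at e2
  rw [s3, hI3] at e3
  have hH : e 0 + e 2 - e 1 - e 3 = g2 := by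
    linear_combination (1 / 4) * (e0 + e2 - e1 - e3)
  have hA : e 3 + 2 * e 2 + 3 * e 1 =
      (-6 - 2 * g2 - ((2 + 2 * Complex.I) * g1 + (2 - 2 * Complex.I) * g3)) / 4 := by
    linear_combination (1 / 4) * (e3 + 2 * e2 + 3 * e1)
  have hB : e 1 + 2 * e 0 + 3 * e 3 =
      (-6 - 2 * g2 + ((2 + 2 * Complex.I) * g1 + (2 - 2 * Complex.I) * g3)) / 4 := by
    linear_combination (1 / 4) * (e1 + 2 * e0 + 3 * e3)
  rw [hA, hB, hH]
  rw [hJab] at j11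
  rw [hJab'] at j33
  linear_combination q22 + 2 * Complex.I * j11 - 2 * Complex.I * j33 - 4 * q13
    + (-(g1 ^ 2 + g3 ^ 2) + 2 * g1 * g3 - 8 * b * g2) * hI2

end L5

theorem lemma5_part5
    (p : ℕ) (hp : p.Prime) (hp8 : p % 8 = 5)
    (x y : ℤ) (hx : x % 4 = 1) (hxy : (p : ℤ) = x ^ 2 + 4 * y ^ 2)
    (θ : ℕ) (hθ : IsPrimitiveRoot (θ : ZMod p) (p - 1))
    (hy : 16 * (((cycD p θ 0).filter (fun a => (a + 1) % p ∈ cycD p θ 1)).card : ℤ)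
        = (p : ℤ) + 1 + 2 * x - 8 * y)
    :
    4 * (eta4 p θ 3 + 2 * eta4 p θ 2 + 3 * eta4 p θ 1) * (eta4 p θ 1 + 2 * eta4 p θ 0 + 3 * eta4 p θ 3)
      ≡ 2 * (3 + 4 * y) * Hval p θ + 5 * (p : ℤ) + 9 [ZMOD ((4 : ℤ) ^ p - 1) / 3] := by
  have : Fact p.Prime := ⟨hp⟩
  have hζ : IsPrimitiveRoot (ZMod.stdAddChar (1 : ZMod p)) p := by
    have h := ZMod.stdAddChar_coe (N := p) 1
    rw [Int.cast_one, Int.cast_one, mul_one] at h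
    rw [h]
    exact Complex.isPrimitiveRoot_exp p hp.ne_zero
  have key := L5.main_id p hp8 x y hx hxy θ hθ hy _ rfl _ (fun _ => rfl)
  have hd := L5.transfer p hp _ hζ
    (2 * (3 + 4 * Polynomial.C y) * ((∑ t ∈ cycD p θ 0, Polynomial.X ^ t)
      + (∑ t ∈ cycD p θ 2, Polynomial.X ^ t) - (∑ t ∈ cycD p θ 1, Polynomial.X ^ t)
      - (∑ t ∈ cycD p θ 3, Polynomial.X ^ t)) + 5 * (p : Polynomial ℤ) + 9
      - 4 * ((∑ t ∈ cycD p θ 3, Polynomial.X ^ t) + 2 * (∑ t ∈ cycD p θ 2, Polynomial.X ^ t)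
        + 3 * (∑ t ∈ cycD p θ 1, Polynomial.X ^ t))
      * ((∑ t ∈ cycD p θ 1, Polynomial.X ^ t) + 2 * (∑ t ∈ cycD p θ 0, Polynomial.X ^ t)
        + 3 * (∑ t ∈ cycD p θ 3, Polynomial.X ^ t))) (by
      simp only [map_sub, map_add, map_mul, map_sum, map_pow, Polynomial.aeval_X, map_ofNat,
        map_natCast, Polynomial.aeval_C]
      rw [key]
      simp)
  rw [Int.modEq_iff_dvd]
  simpa [eta4, Hval, Polynomial.eval_finsetSum] using hd
end
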